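/- arXiv:1408.4897 — 9 statements merged into one kernel-verified Lean document; each statement's English description precedes it below -/
import Mathlib

section
/- Let I be an operator ideal with F(H) ⊆ I ⊆ K(H). For a permutation σ of the positive integers, the operator V_σ satisfies V_σ − 1 ∈ I if and only if σ is a finite permutation (i.e., σ(n) = n for all but finitely many n). -/
/-!
If `σ` is finite, then `V - 1` maps every basis vector, hence all of `H`, into the span of the
finitely many nonzero vectors `b (σ⁻¹ n) - b n` (a finite-dimensional subspace is closed), so it has
finite rank and lies in `I`.

Conversely, `V - 1 ∈ I` is compact. A compact operator `T` cannot have `⟪b n, T (b n)⟫ = -1` for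
infinitely many `n`: a subsequence of `T (b n)` would converge to some `y`, and then `⟪b n, y⟫`
would tend to `-1` along it, contradicting Bessel's inequality. For `T = V - 1` this
diagonal entry is `-1` exactly at the `n` moved by `σ`.
-/

/-- A (two-sided) operator ideal of `B(H)`, modeled as a set of bounded operators that is a
complex-linear subspace closed under left and right multiplication by arbitrary bounded
operators. -/
def IsOperatorIdeal {H : Type*} [NormedAddCommGroup H] [InnerProductSpace ℂ H]
    (I : Set (H →L[ℂ] H)) : Prop :=
  (0 : H →L[ℂ] H) ∈ I ∧
  (∀ A B : H →L[ℂ] H, A ∈ I → B ∈ I → A + B ∈ I) ∧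
  (∀ (c : ℂ) (A : H →L[ℂ] H), A ∈ I → c • A ∈ I) ∧
  (∀ (T A : H →L[ℂ] H), A ∈ I → T * A ∈ I ∧ A * T ∈ I)

open Filter Topology

/-- A compact operator has only finitely many diagonal entries equal to `-1`, because the diagonal
entries of a compact operator tend to zero. -/
lemma finite_diagonal_eq_neg_one {H : Type*} [NormedAddCommGroup H] [InnerProductSpace ℂ H]
    {b : ℕ → H} (hb : Orthonormal ℂ b) {T : H →L[ℂ] H} (hT : IsCompactOperator T) :
    {n : ℕ | inner ℂ (b n) (T (b n)) = -1}.Finite := by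
  by_contra hinf
  let e := Set.Infinite.natEmbedding _ hinf
  have hK := hT.isCompact_closure_image_closedBall 1
  have hmem : ∀ k, T (b (e k)) ∈ closure (T '' Metric.closedBall 0 1) := fun k =>
    subset_closure ⟨b (e k), by simp [hb.1], rfl⟩
  obtain ⟨y, -, φ, hφ, hlim⟩ := hK.tendsto_subseq hmem
  have hinj : Function.Injective fun k => (e (φ k) : ℕ) :=
    Subtype.val_injective.comp (e.injective.comp hφ.injective)
  have hsq : Tendsto (fun n => ‖inner ℂ (b n) y‖ ^ 2) cofinite (𝓝 0) :=
    (hb.inner_products_summable y).tendsto_cofinite_zero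
  have hBessel : Tendsto (fun k => ‖inner ℂ (b (e (φ k))) y‖ ^ 2) atTop (𝓝 0) := by
    rw [← Nat.cofinite_eq_atTop]
    exact hsq.comp hinj.tendsto_cofinite
  have hdist : Tendsto (fun k => ‖T (b (e (φ k))) - y‖) atTop (𝓝 0) :=
    tendsto_iff_norm_sub_tendsto_zero.1 hlim
  obtain ⟨k, h1, h2⟩ := ((hBessel.eventually (gt_mem_nhds (show (0 : ℝ) < 1 / 4 by norm_num))).and
    (hdist.eventually (gt_mem_nhds (show (0 : ℝ) < 1 / 2 by norm_num)))).exists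
  have hdiag : inner ℂ (b (e (φ k))) (T (b (e (φ k)))) = -1 := (e (φ k)).2
  have hCS := norm_inner_le_norm (𝕜 := ℂ) (b (e (φ k))) (T (b (e (φ k))) - y)
  rw [inner_sub_right, hdiag, hb.1, one_mul] at hCS
  have htri := norm_sub_le (-1 - inner ℂ (b (e (φ k))) y) (-inner ℂ (b (e (φ k))) y)
  simp only [sub_neg_eq_add, sub_add_cancel, norm_neg, norm_one] at htri
  nlinarith [norm_nonneg (inner ℂ (b (e (φ k))) y)]

/-- Let `I` be an operator ideal with `F(H) ⊆ I ⊆ K(H)`. For a permutation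
`σ` of the natural numbers, the operator `V_σ` (determined by `V_σ bₙ = b_{σ⁻¹ n}`) satisfies
`V_σ - 1 ∈ I` if and only if `σ` is a finite permutation. -/
theorem permutation_unitary_mem_ideal_iff_finite_perm
    {H : Type*} [NormedAddCommGroup H] [InnerProductSpace ℂ H] [CompleteSpace H]
    (b : HilbertBasis ℕ ℂ H)
    (I : Set (H →L[ℂ] H)) (hI : IsOperatorIdeal I)
    (hFI : ∀ T : H →L[ℂ] H,
      FiniteDimensional ℂ (LinearMap.range (T : H →ₗ[ℂ] H)) → T ∈ I)
    (hIK : ∀ T ∈ I, IsCompactOperator (T : H →L[ℂ] H))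
    (σ : Equiv.Perm ℕ)
    (V : H →L[ℂ] H) (hV : V ∈ unitary (H →L[ℂ] H))
    (hVσ : ∀ n : ℕ, V (b n) = b (σ.symm n)) :
    (V - 1) ∈ I ↔ {n : ℕ | σ n ≠ n}.Finite := by
  have hT : ∀ n, (V - 1) (b n) = b (σ.symm n) - b n := fun n => by simp [hVσ]
  constructor
  · intro h
    refine (finite_diagonal_eq_neg_one b.orthonormal (hIK _ h)).subset fun n hn => ?_
    have hne : n ≠ σ.symm n := fun h' => hn ((Equiv.eq_symm_apply σ).1 h')
    have h0 : inner ℂ (b n) (b (σ.symm n)) = 0 := b.orthonormal.2 hne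
    have h1 : ‖b n‖ = 1 := b.orthonormal.1 n
    simp only [Set.mem_ofPred_eq]
    rw [hT, inner_sub_right, h0, inner_self_eq_norm_sq_to_K, h1]
    simp
  · intro hfin
    apply hFI
    let W : Submodule ℂ H :=
      Submodule.span ℂ ((fun n => b (σ.symm n) - b n) '' {n : ℕ | σ n ≠ n})
    have hWfin : FiniteDimensional ℂ W := FiniteDimensional.span_of_finite ℂ (hfin.image _)
    have hclosed : IsClosed ((W.comap ((V - 1 : H →L[ℂ] H) : H →ₗ[ℂ] H) : Submodule ℂ H) : Set H) :=
      W.closed_of_finiteDimensional.preimage (V - 1).continuous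
    have hspan : Submodule.span ℂ (Set.range b) ≤ W.comap ((V - 1 : H →L[ℂ] H) : H →ₗ[ℂ] H) := by
      rw [Submodule.span_le]
      rintro _ ⟨n, rfl⟩
      change (V - 1) (b n) ∈ W
      rw [hT]
      by_cases hn : σ n = n
      · rw [(Equiv.symm_apply_eq σ).2 hn.symm, sub_self]
        exact W.zero_mem
      · exact Submodule.subset_span ⟨n, hn, rfl⟩
    have htop := Submodule.topologicalClosure_minimal _ hspan hclosed
    rw [b.dense_span] at htop
    have hrange : LinearMap.range ((V - 1 : H →L[ℂ] H) : H →ₗ[ℂ] H) ≤ W := by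
      rintro _ ⟨x, rfl⟩
      exact htop (Submodule.mem_top (x := x))
    exact Submodule.finiteDimensional_of_le hrange
end

section
/- Let I be an operator ideal with F(H) ⊆ I ⊆ K(H), and let X ∈ I be a normal operator. Suppose W₁, W₂ ∈ U_I(H) are such that D₁ := W₁XW₁* and D₂ := W₂XW₂* are both diagonal with respect to the basis b, and suppose the diagonal entries of D₁ are pairwise distinct (i.e., X has spectral multiplicities one). Then there exists a finite permutation σ of the positive integers such that D₂ = V_σ D₁ V_σ⁻¹. -/
open Filter Topology

lemma inner_diagonal_apply {H : Type*} [NormedAddCommGroup H] [InnerProductSpace ℂ H]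
    (b : HilbertBasis ℕ ℂ H) (T : H →L[ℂ] H) (d : ℕ → ℂ) (hT : ∀ n, T (b n) = d n • b n)
    (m : ℕ) (x : H) : inner ℂ (b m) (T x) = d m * inner ℂ (b m) x := by
  have hdense : Dense (Submodule.span ℂ (Set.range b) : Set H) :=
    (Submodule.dense_iff_topologicalClosure_eq_top).2 b.dense_span
  have h : (innerSL ℂ (b m)).comp T = d m • innerSL ℂ (b m) := by
    refine ContinuousLinearMap.ext_on hdense ?_
    rintro _ ⟨k, rfl⟩
    have := orthonormal_iff_ite.1 b.orthonormal m k
    by_cases hk : m = k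
    · subst hk
      simp [hT]
    · rw [if_neg hk] at this
      simp [hT, this]
  simpa using congrArg (fun f => f x) h

lemma tendsto_inner_basis {H : Type*} [NormedAddCommGroup H] [InnerProductSpace ℂ H]
    (b : HilbertBasis ℕ ℂ H) (y : H) :
    Tendsto (fun n => inner ℂ (b n) y) atTop (𝓝 0) := by
  have h := (b.orthonormal.inner_products_summable (x := y)).tendsto_atTop_zero
  rw [tendsto_zero_iff_norm_tendsto_zero]
  simpa [Real.sqrt_sq] using h.sqrt

/-- A compact operator takes any nonzero value only finitely often on the diagonal: along an
infinite set of indices some subsequence of `K (b n)` converges in norm, and pairing with `b n`,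
which tends weakly to `0`, makes the diagonal entries tend to `0`. -/
lemma finite_setOf_diagonal_eq_of_compact {H : Type*} [NormedAddCommGroup H]
    [InnerProductSpace ℂ H] (b : HilbertBasis ℕ ℂ H) (K : H →L[ℂ] H) (hK : IsCompactOperator K)
    (c : ℂ) (hc : c ≠ 0) : {n : ℕ | inner ℂ (b n) (K (b n)) = c}.Finite := by
  by_contra hinf
  obtain ⟨φ, hφ, hφc⟩ := extraction_of_frequently_atTop
    (Nat.frequently_atTop_iff_infinite.2 hinf)
  have hcpt := IsCompactOperator.isCompact_closure_image_closedBall (f := (K : H →ₗ[ℂ] H)) hK 1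
  obtain ⟨y, -, ψ, hψ, hy⟩ := hcpt.tendsto_subseq (x := fun k => K (b (φ k))) fun k =>
    subset_closure ⟨b (φ k), by simp [b.orthonormal.1], rfl⟩
  have h1 : Tendsto (fun k => inner ℂ (b (φ (ψ k))) y) atTop (𝓝 0) :=
    (tendsto_inner_basis b y).comp (hφ.comp hψ).tendsto_atTop
  have h2 : Tendsto (fun k => inner ℂ (b (φ (ψ k))) (K (b (φ (ψ k))) - y)) atTop (𝓝 0) := by
    refine squeeze_zero_norm (fun k => ?_) (tendsto_iff_norm_sub_tendsto_zero.1 hy)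
    have := norm_inner_le_norm (𝕜 := ℂ) (b (φ (ψ k))) (K (b (φ (ψ k))) - y)
    rwa [b.orthonormal.1, one_mul] at this
  have h3 := h2.add h1
  simp only [← inner_add_right, sub_add_cancel, hφc, add_zero] at h3
  exact hc (tendsto_nhds_unique tendsto_const_nhds h3)

/-- Let `I` be an operator ideal with `F(H) ⊆ I ⊆ K(H)`, and let `X ∈ I` be
normal.  If `W₁, W₂ ∈ U_I(H)` are such that `D₁ := W₁ X W₁*` and `D₂ := W₂ X W₂*` are both
diagonal with respect to the basis `b`, and the diagonal entries of `D₁` are pairwise distinct,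
then there is a finite permutation `σ` with `D₂ = V_σ D₁ V_σ⁻¹`, i.e. the diagonal entries of
`D₂` are those of `D₁` permuted by `σ`. -/
theorem diagonalization_unique_up_to_finite_permutation
    {H : Type*} [NormedAddCommGroup H] [InnerProductSpace ℂ H] [CompleteSpace H]
    (b : HilbertBasis ℕ ℂ H)
    (I : Set (H →L[ℂ] H)) (hI : IsOperatorIdeal I)
    (hFI : ∀ T : H →L[ℂ] H,
      FiniteDimensional ℂ (LinearMap.range (T : H →ₗ[ℂ] H)) → T ∈ I)
    (hIK : ∀ T ∈ I, IsCompactOperator (T : H →L[ℂ] H))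
    (X : H →L[ℂ] H) (hX : X ∈ I) (hXnormal : star X * X = X * star X)
    (W₁ W₂ : H →L[ℂ] H)
    (hW₁ : W₁ ∈ unitary (H →L[ℂ] H)) (hW₂ : W₂ ∈ unitary (H →L[ℂ] H))
    (hW₁I : W₁ - 1 ∈ I) (hW₂I : W₂ - 1 ∈ I)
    (d₁ d₂ : ℕ → ℂ)
    (hD₁ : ∀ n : ℕ, (W₁ * X * star W₁) (b n) = d₁ n • b n)
    (hD₂ : ∀ n : ℕ, (W₂ * X * star W₂) (b n) = d₂ n • b n)
    (hmult : Function.Injective d₁) :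
    ∃ σ : Equiv.Perm ℕ, {n : ℕ | σ n ≠ n}.Finite ∧ ∀ n : ℕ, d₂ n = d₁ (σ n) := by
  have hW₁s : star W₁ * W₁ = 1 := (Unitary.mem_iff.1 hW₁).1
  have hW₁s' : W₁ * star W₁ = 1 := (Unitary.mem_iff.1 hW₁).2
  have hW₂s : star W₂ * W₂ = 1 := (Unitary.mem_iff.1 hW₂).1
  have hUmem : W₂ * star W₁ ∈ unitary (H →L[ℂ] H) := mul_mem hW₂ (Unitary.star_mem hW₁)
  have hKI : W₂ * star W₁ - 1 ∈ I := by
    have e : W₂ * star W₁ - 1 = ((W₂ - 1) + (-1 : ℂ) • (W₁ - 1)) * star W₁ := by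
      rw [← hW₁s', ← sub_mul]
      congr 1
      simp
    rw [e]
    exact (hI.2.2.2 _ _ (hI.2.1 _ _ hW₂I (hI.2.2.1 _ _ hW₁I))).2
  have hinter : (W₂ * X * star W₂) * (W₂ * star W₁) = (W₂ * star W₁) * (W₁ * X * star W₁) := by
    calc _ = W₂ * X * (star W₂ * W₂) * star W₁ := by simp only [mul_assoc]
      _ = W₂ * (star W₁ * W₁) * X * star W₁ := by rw [hW₂s, hW₁s]; simp
      _ = _ := by simp only [mul_assoc]
  generalize W₂ * star W₁ = U at hUmem hKI hinter
  have hUs : star U * U = 1 := (Unitary.mem_iff.1 hUmem).1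
  have hUs' : U * star U = 1 := (Unitary.mem_iff.1 hUmem).2
  have hUU (x : H) : star U (U x) = x := congrArg (fun f : H →L[ℂ] H => f x) hUs
  have hUU' (x : H) : U (star U x) = x := congrArg (fun f : H →L[ℂ] H => f x) hUs'
  have hadj (x y : H) : inner ℂ x (star U y) = inner ℂ (U x) y := by
    rw [ContinuousLinearMap.star_eq_adjoint, ContinuousLinearMap.adjoint_inner_right]
  have hb (n : ℕ) : b n ≠ 0 := b.orthonormal.ne_zero n
  have hcoef (m n : ℕ) (h : inner ℂ (b m) (U (b n)) ≠ 0) : d₂ m = d₁ n := by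
    have h1 : (W₂ * X * star W₂) (U (b n)) = U ((W₁ * X * star W₁) (b n)) :=
      congrArg (fun f : H →L[ℂ] H => f (b n)) hinter
    have h2 := inner_diagonal_apply b _ d₂ hD₂ m (U (b n))
    rw [h1, hD₁, map_smul, inner_smul_right] at h2
    exact (mul_right_cancel₀ h h2).symm
  have hzero (x : H) (h : ∀ n, inner ℂ (b n) x = 0) : x = 0 := by
    apply b.repr.injective
    ext n
    simp [HilbertBasis.repr_apply_apply, h]
  have hrow (m : ℕ) : ∃ n, d₂ m = d₁ n := by
    by_contra! hne
    have h0 : star U (b m) = 0 := hzero _ fun n => by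
      rw [hadj, ← inner_conj_symm, not_imp_comm.1 (hcoef m n) (hne n), map_zero]
    apply hb m
    rw [← hUU' (b m), h0, map_zero]
  have hcol (n : ℕ) : ∃ m, d₂ m = d₁ n := by
    by_contra! hne
    have h0 : U (b n) = 0 := hzero _ fun m => not_imp_comm.1 (hcoef m n) (hne m)
    apply hb n
    rw [← hUU (b n), h0, map_zero]
  -- The row `m` of `U` is supported in the single column `n` with `d₁ n = d₂ m`.
  have hline (m n : ℕ) (h : d₂ m = d₁ n) :
      star U (b m) = (inner ℂ (b n) (star U (b m)) : ℂ) • b n := by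
    rw [← sub_eq_zero]
    refine hzero _ fun k => ?_
    have hk := orthonormal_iff_ite.1 b.orthonormal k n
    rw [inner_sub_right, inner_smul_right, hk]
    by_cases hkn : k = n
    · subst hkn
      simp
    · have : inner ℂ (b m) (U (b k)) = 0 :=
        not_imp_comm.1 (hcoef m k) fun e => hkn (hmult (e.symm.trans h))
      rw [hadj, ← inner_conj_symm, this]
      simp [hkn]
  choose f hf using hrow
  have hfinj : Function.Injective f := by
    intro m m' hmm
    by_contra hne
    have e1 := hline m (f m) (hf m)
    have e2 := hline m' (f m) (hmm ▸ hf m')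
    generalize inner ℂ (b (f m)) (star U (b m)) = a at e1
    generalize inner ℂ (b (f m)) (star U (b m')) = a' at e2
    have e3 : a' • b m = a • b m' := by
      rw [← hUU' (b m), ← hUU' (b m'), e1, e2, ← map_smul U, ← map_smul U, smul_comm]
    have e4 := congrArg (fun x => inner ℂ (b m) x) e3
    have o1 := orthonormal_iff_ite.1 b.orthonormal m m
    have o2 := orthonormal_iff_ite.1 b.orthonormal m m'
    simp only [inner_smul_right, o1, o2, if_neg hne, if_true, mul_one, mul_zero] at e4
    apply hb m'
    rw [← hUU' (b m'), e2, e4, zero_smul, map_zero]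
  have hfsurj : Function.Surjective f := fun n => by
    obtain ⟨m, hm⟩ := hcol n
    exact ⟨m, hmult ((hf m).symm.trans hm)⟩
  refine ⟨Equiv.ofBijective f ⟨hfinj, hfsurj⟩, ?_, hf⟩
  refine (finite_setOf_diagonal_eq_of_compact b (U - 1) (hIK _ hKI) (-1) (by simp)).subset ?_
  intro n hn
  have h0 : inner ℂ (b n) (U (b n)) = 0 :=
    not_imp_comm.1 (hcoef n n) fun e => hn (hmult ((hf n).symm.trans e))
  have o1 := orthonormal_iff_ite.1 b.orthonormal n n
  rw [if_pos rfl] at o1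
  change inner ℂ (b n) (U (b n) - b n) = -1
  rw [inner_sub_right, h0, o1, zero_sub]
end

section
/- Let v = {v_n}_{n≥1} and w = {w_n}_{n≥1} be orthonormal bases of H, and suppose there exists δ > 0 such that ‖w_n − α v_m‖ ≥ δ for all n, m ≥ 1 and all α ∈ ℂ with |α| = 1. Let X be a bounded operator with X v_n = λ_n v_n for all n, where the scalars λ_n are pairwise distinct. Then for every unitary W on H with W − 1 compact, the operator WXW⁻¹ is not diagonal with respect to w (i.e., some w_n fails to be an eigenvector of WXW⁻¹). -/
/-!
If `w n` is an eigenvector of `W X W*`, then `W* (w n)` is an eigenvector of `X`. The eigenvalues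
`lam k` being distinct, it is a unimodular multiple `a • v k` of a single basis vector
(`exists_eq_smul_of_eigenvector`), so `w n = a • W (v k)` and `‖(W - 1) (v k)‖ = ‖w n - a • v k‖`
is at least `δ`. The index `k` depends injectively on `n` because the `w n` are orthonormal. Hence
`W - 1` would be bounded below on an infinite orthonormal sequence, which no compact operator is
(`not_le_norm_of_isCompactOperator`).
-/

open Filter Topology

/-- A compact operator is not bounded below on an orthonormal sequence: a limit point `y` of
`K (e n)` would be nonzero, while Bessel's inequality gives `⟪K* y, e n⟫ → 0`, so `⟪y, y⟫ = 0`. -/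
lemma not_le_norm_of_isCompactOperator
    {H : Type*} [NormedAddCommGroup H] [InnerProductSpace ℂ H] [CompleteSpace H]
    (K : H →L[ℂ] H) (hK : IsCompactOperator (K : H → H)) (e : ℕ → H) (he : Orthonormal ℂ e)
    (δ : ℝ) (hδ : 0 < δ) : ¬ ∀ n, δ ≤ ‖K (e n)‖ := by
  intro h
  obtain ⟨S, hS, hsub⟩ := IsCompactOperator.image_closedBall_subset_compact
    (f := (K : H →ₗ[ℂ] H)) hK 1
  have hmem : ∀ n, K (e n) ∈ S := fun n =>
    hsub ⟨e n, by simp [he.1 n], rfl⟩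
  obtain ⟨y, -, φ, hφ, hy⟩ := hS.tendsto_subseq hmem
  have hlow : δ ≤ ‖y‖ := ge_of_tendsto' hy.norm fun n => h (φ n)
  have h1 : Tendsto (fun n => inner ℂ (K (e (φ n))) y) atTop (𝓝 (inner ℂ y y)) :=
    hy.inner tendsto_const_nhds
  have h2 : Tendsto (fun n => ‖inner ℂ (e n) (ContinuousLinearMap.adjoint K y)‖ ^ 2) atTop
      (𝓝 0) :=
    (he.inner_products_summable _).tendsto_atTop_zero
  have h3 : Tendsto (fun n => ‖inner ℂ (K (e (φ n))) y‖ ^ 2) atTop (𝓝 0) := by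
    simpa [Function.comp_def, ContinuousLinearMap.adjoint_inner_right] using
      h2.comp hφ.tendsto_atTop
  have h4 : ‖inner ℂ y y‖ ^ 2 = 0 := tendsto_nhds_unique (h1.norm.pow 2) h3
  have h5 : y = 0 := by simpa using h4
  rw [h5, norm_zero] at hlow
  linarith

/-- The eigenspaces of a diagonal operator with distinct diagonal entries are spanned by
single basis vectors, since the coordinates `x k` of an eigenvector with eigenvalue `c` satisfy
`lam k * x k = c * x k`. -/
lemma exists_eq_smul_of_eigenvector
    {H : Type*} [NormedAddCommGroup H] [InnerProductSpace ℂ H]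
    (v : HilbertBasis ℕ ℂ H) (X : H →L[ℂ] H) (lam : ℕ → ℂ)
    (hX : ∀ n : ℕ, X (v n) = lam n • v n) (hlam : Function.Injective lam)
    (u : H) (hu : u ≠ 0) (c : ℂ) (hc : X u = c • u) : ∃ (k : ℕ) (a : ℂ), u = a • v k := by
  have hv : ∀ i j, inner ℂ (v i) (v j) = if i = j then (1 : ℂ) else 0 :=
    orthonormal_iff_ite.mp v.orthonormal
  have hcoord : ∀ k, inner ℂ (v k) (X u) = lam k * inner ℂ (v k) u := by
    intro k
    have : (innerSL ℂ (v k)).comp X = lam k • innerSL ℂ (v k) := by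
      refine ContinuousLinearMap.ext_on (s := Set.range v) ?_ ?_
      · rw [dense_iff_closure_eq, ← Submodule.topologicalClosure_coe, v.dense_span]
        rfl
      · rintro _ ⟨j, rfl⟩
        by_cases hkj : k = j <;> simp [hX, hv, hkj]
    simpa using congrArg (fun f : H →L[ℂ] ℂ => f u) this
  have hzero : ∀ k, lam k ≠ c → inner ℂ (v k) u = 0 := by
    intro k hk
    have h := hcoord k
    rw [hc, inner_smul_right] at h
    have : (lam k - c) * inner ℂ (v k) u = 0 := by rw [sub_mul, ← h, sub_self]
    exact (mul_eq_zero.mp this).resolve_left (sub_ne_zero.mpr hk)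
  have hrepr : HasSum (fun k => inner ℂ (v k) u • v k) u := by
    simpa [v.repr_apply_apply] using v.hasSum_repr u
  obtain ⟨k, hk⟩ : ∃ k, lam k = c := by
    by_contra! hne
    refine hu (hrepr.unique ?_)
    simp [fun k => hzero k (hne k), hasSum_zero]
  refine ⟨k, inner ℂ (v k) u, hrepr.unique (hasSum_single k fun j hj => ?_)⟩
  rw [hzero j fun h => hj (hlam (h.trans hk.symm)), zero_smul]

/-- Let `v` and `w` be orthonormal bases of `H` such that for some `δ > 0`,
`‖wₙ - α • vₘ‖ ≥ δ` for all `n, m` and all unimodular `α ∈ ℂ`.  Let `X` be a bounded operator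
with `X vₙ = λₙ • vₙ`, the `λₙ` pairwise distinct.  Then for every unitary `W` with `W - 1`
compact, the operator `W X W⁻¹ = W X W*` is not diagonal with respect to `w`. -/
theorem not_diagonal_wrt_separated_basis
    {H : Type*} [NormedAddCommGroup H] [InnerProductSpace ℂ H] [CompleteSpace H]
    (v w : HilbertBasis ℕ ℂ H)
    (δ : ℝ) (hδ : 0 < δ)
    (hsep : ∀ (n m : ℕ) (α : ℂ), ‖α‖ = 1 → δ ≤ ‖w n - α • v m‖)
    (X : H →L[ℂ] H) (lam : ℕ → ℂ)
    (hX : ∀ n : ℕ, X (v n) = lam n • v n)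
    (hlam : Function.Injective lam)
    (W : H →L[ℂ] H) (hW : W ∈ unitary (H →L[ℂ] H))
    (hWcompact : IsCompactOperator ((W - 1 : H →L[ℂ] H) : H → H)) :
    ¬ ∀ n : ℕ, ∃ c : ℂ, (W * X * star W) (w n) = c • w n := by
  intro hdiag
  have hWW : ∀ x, W (star W x) = x := fun x => by
    rw [← mul_apply_eq_comp, Unitary.mul_star_self_of_mem hW,
      one_apply_eq_self]
  have hWW' : ∀ x, star W (W x) = x := fun x => by
    rw [← mul_apply_eq_comp, Unitary.star_mul_self_of_mem hW,
      one_apply_eq_self]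
  have hWnorm : ∀ x, ‖W x‖ = ‖x‖ :=
    (ContinuousLinearMap.norm_map_iff_adjoint_comp_self W).mpr (Unitary.star_mul_self_of_mem hW)
  have key : ∀ n, ∃ (k : ℕ) (a : ℂ), w n = a • W (v k) := by
    intro n
    obtain ⟨c, hc⟩ := hdiag n
    have hne : star W (w n) ≠ 0 := by
      intro h0
      have := hWW (w n)
      rw [h0, map_zero] at this
      exact w.orthonormal.ne_zero n this.symm
    have heig : X (star W (w n)) = c • star W (w n) := by
      rw [← map_smul, ← hc]
      exact (hWW' _).symm
    obtain ⟨k, a, hka⟩ := exists_eq_smul_of_eigenvector v X lam hX hlam _ hne c heig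
    exact ⟨k, a, by rw [← map_smul, ← hka, hWW]⟩
  choose σ a hσ using key
  have ha : ∀ n, ‖a n‖ = 1 := by
    intro n
    have h := w.orthonormal.1 n
    rwa [hσ n, norm_smul, hWnorm, v.orthonormal.1, mul_one] at h
  have hσinj : Function.Injective σ := by
    intro n m hnm
    by_contra hne
    have h : inner ℂ (w n) (w m) = 0 := w.orthonormal.2 hne
    have hWv : W (v (σ m)) ≠ 0 := by
      rw [← norm_ne_zero_iff, hWnorm, v.orthonormal.1]
      exact one_ne_zero
    have han : a n ≠ 0 := by rw [← norm_ne_zero_iff, ha]; exact one_ne_zero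
    have ham : a m ≠ 0 := by rw [← norm_ne_zero_iff, ha]; exact one_ne_zero
    rw [hσ n, hσ m, hnm, inner_smul_left, inner_smul_right] at h
    simp [han, ham, hWv] at h
  refine not_le_norm_of_isCompactOperator (W - 1) hWcompact (fun n => v (σ n))
    (v.orthonormal.comp σ hσinj) δ hδ fun n => ?_
  calc δ ≤ ‖w n - a n • v (σ n)‖ := hsep n (σ n) (a n) (ha n)
    _ = ‖a n • (W - 1) (v (σ n))‖ := by
      rw [sub_apply, one_apply_eq_self, smul_sub, ← hσ n]
    _ = ‖(W - 1) (v (σ n))‖ := by rw [norm_smul, ha, one_mul]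
end

section
/- Fix an orthonormal basis b = {b_n}_{n≥1} of H. There exists a family of vectors {v^{(t)}_n : n ≥ 1, 0 ≤ t < π/2} such that: (i) for every t ∈ [0, π/2) the family v^{(t)} = {v^{(t)}_n}_{n≥1} is an orthonormal basis of H, with v^{(0)} = b; and (ii) whenever s ≠ t in [0, π/2), there exists δ > 0 such that ‖v^{(t)}_n − α v^{(s)}_m‖ ≥ δ for all n, m ≥ 1 and all α ∈ ℂ with |α| = 1. -/
/-!
The basis vectors are grouped into consecutive pairs `(b (2k), b (2k+1))`, and `v t` is obtained by
rotating each of these planes by the angle `t`. By `inner_rotated`, the inner product of `v t n`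
with `v s m` is `cos (t - s)`, `± sin (t - s)` or `0`. For `s = t` this gives orthonormality, and
the inverse rotation recovers `b` in the span. For `s ≠ t` in `[0, π/2)` one has
`0 < |t - s| < π/2`, so all these inner products have modulus at most some `c < 1`, and the
Cauchy–Schwarz inequality gives `‖v t n - α • v s m‖ ≥ |⟪v t n, v t n - α • v s m⟫| ≥ 1 - c`.
-/

open Set

/-- The other index in the pair `{2k, 2k+1}` containing `n`. -/
def partner (n : ℕ) : ℕ := if Even n then n + 1 else n - 1

/-- The sign `(-1)^n` of the `sin` term in the rotated vector with index `n`. -/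
def pairSign (n : ℕ) : ℝ := if Even n then 1 else -1

lemma partner_partner (n : ℕ) : partner (partner n) = n := by
  unfold partner; grind

lemma partner_ne (n : ℕ) : partner n ≠ n := by
  unfold partner; grind

lemma pairSign_partner (n : ℕ) : pairSign (partner n) = -pairSign n := by
  unfold pairSign partner; grind

lemma pairSign_mul_self (n : ℕ) : pairSign n * pairSign n = 1 := by
  unfold pairSign; split_ifs <;> norm_num

lemma abs_pairSign (n : ℕ) : |pairSign n| = 1 := by
  unfold pairSign; split_ifs <;> norm_num

section Rotation

variable {H : Type*} [NormedAddCommGroup H] [InnerProductSpace ℂ H]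

/-- The family `b` with each plane spanned by `b (2k)` and `b (2k+1)` rotated by the angle `t`. -/
noncomputable def rotated (b : ℕ → H) (t : ℝ) (n : ℕ) : H :=
  ((Real.cos t : ℝ) : ℂ) • b n + ((pairSign n * Real.sin t : ℝ) : ℂ) • b (partner n)

lemma inner_rotated {b : ℕ → H} (hb : Orthonormal ℂ b) (s t : ℝ) (n m : ℕ) :
    inner ℂ (rotated b t n) (rotated b s m) =
      (((if n = m then Real.cos (t - s) else 0) +
        (if partner n = m then pairSign n * Real.sin (t - s) else 0) : ℝ) : ℂ) := by
  have key : ∀ i j, inner ℂ (b i) (b j) = if i = j then (1 : ℂ) else 0 :=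
    orthonormal_iff_ite.mp hb
  simp only [rotated, inner_add_left, inner_add_right, inner_smul_left, inner_smul_right, key,
    Complex.conj_ofReal]
  have hp := partner_ne n
  by_cases h1 : n = m
  · subst h1
    have hs := pairSign_mul_self n
    simp only [hp, hp.symm, if_true, if_false, Real.cos_sub]
    norm_cast
    linear_combination Real.sin t * Real.sin s * hs
  · by_cases h2 : partner n = m
    · subst h2
      simp only [partner_partner, hp, hp.symm, if_true, if_false, Real.sin_sub, pairSign_partner]
      norm_cast
      ring
    · have h3 : n ≠ partner m := fun h => h2 (by rw [h, partner_partner])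
      have h4 : partner n ≠ partner m := fun h => h1 (by
        rw [← partner_partner n, h, partner_partner])
      simp [h1, h2, h3, h4]

lemma norm_inner_rotated_le {b : ℕ → H} (hb : Orthonormal ℂ b) (s t : ℝ) (n m : ℕ) :
    ‖inner ℂ (rotated b t n) (rotated b s m)‖ ≤
      max |Real.cos (t - s)| |Real.sin (t - s)| := by
  rw [inner_rotated hb, Complex.norm_real, Real.norm_eq_abs]
  have hp := partner_ne n
  by_cases h1 : n = m
  · subst h1; simp [hp]
  · by_cases h2 : partner n = m <;> simp [h1, h2, abs_mul, abs_pairSign]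

lemma orthonormal_rotated {b : ℕ → H} (hb : Orthonormal ℂ b) (t : ℝ) :
    Orthonormal ℂ (rotated b t) := by
  rw [orthonormal_iff_ite]
  intro i j
  rw [inner_rotated hb]
  split_ifs <;> simp

lemma mem_span_rotated (b : ℕ → H) (t : ℝ) (n : ℕ) :
    b n ∈ Submodule.span ℂ (Set.range (rotated b t)) := by
  have hs := pairSign_mul_self n
  -- The inverse rotation of the pair of rotated vectors.
  have h : b n = ((Real.cos t : ℝ) : ℂ) • rotated b t n
      - ((pairSign n * Real.sin t : ℝ) : ℂ) • rotated b t (partner n) := by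
    have h1 : ((Real.cos t : ℝ) : ℂ) * ((Real.cos t : ℝ) : ℂ)
        + ((pairSign n * Real.sin t : ℝ) : ℂ) * ((pairSign n * Real.sin t : ℝ) : ℂ) = 1 := by
      norm_cast
      linear_combination Real.sin t ^ 2 * hs + Real.sin_sq_add_cos_sq t
    have h2 : ((pairSign (partner n) * Real.sin t : ℝ) : ℂ)
        = -((pairSign n * Real.sin t : ℝ) : ℂ) := by
      rw [pairSign_partner]; push_cast; ring
    simp only [rotated, partner_partner, h2]
    refine (one_smul ℂ (b n)).symm.trans ?_
    rw [← h1]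
    module
  rw [h]
  exact Submodule.sub_mem _
    (Submodule.smul_mem _ _ (Submodule.subset_span ⟨_, rfl⟩))
    (Submodule.smul_mem _ _ (Submodule.subset_span ⟨_, rfl⟩))

end Rotation

lemma max_abs_cos_sin_lt_one {d : ℝ} (h0 : d ≠ 0) (h1 : -(Real.pi / 2) < d)
    (h2 : d < Real.pi / 2) : max |Real.cos d| |Real.sin d| < 1 := by
  have hc : 0 < Real.cos d := Real.cos_pos_of_mem_Ioo ⟨h1, h2⟩
  have hs : Real.sin d ≠ 0 := by
    rw [Ne, Real.sin_eq_zero_iff_of_lt_of_lt (by linarith [Real.pi_pos])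
      (by linarith [Real.pi_pos])]
    exact h0
  have := Real.sin_sq_add_cos_sq d
  refine max_lt ?_ ?_ <;> rw [← sq_lt_one_iff_abs_lt_one]
  · linarith [pow_pos hc 2, sq_pos_of_ne_zero hs]
  · linarith [pow_pos hc 2]

/-- Fix an orthonormal basis `b = {bₙ}` of `H`.  There exists a family of
vectors `{v^(t)ₙ : n ≥ 1, 0 ≤ t < π/2}` such that (i) for every `t ∈ [0, π/2)` the family
`v^(t)` is an orthonormal basis of `H`, with `v^(0) = b`; and (ii) whenever `s ≠ t` in
`[0, π/2)` there exists `δ > 0` with `‖v^(t)ₙ - α • v^(s)ₘ‖ ≥ δ` for all `n, m` and all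
unimodular `α ∈ ℂ`. -/
theorem exists_uncountable_family_of_uniformly_separated_orthonormal_bases
    {H : Type*} [NormedAddCommGroup H] [InnerProductSpace ℂ H] [CompleteSpace H]
    (b : HilbertBasis ℕ ℂ H) :
    ∃ v : ℝ → ℕ → H,
      (∀ t ∈ Ico (0 : ℝ) (Real.pi / 2),
        Orthonormal ℂ (v t) ∧
          (Submodule.span ℂ (Set.range (v t))).topologicalClosure = ⊤) ∧
      (∀ n : ℕ, v 0 n = b n) ∧
      (∀ s ∈ Ico (0 : ℝ) (Real.pi / 2), ∀ t ∈ Ico (0 : ℝ) (Real.pi / 2), s ≠ t →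
        ∃ δ > (0 : ℝ), ∀ (n m : ℕ) (α : ℂ), ‖α‖ = 1 → δ ≤ ‖v t n - α • v s m‖) := by
  refine ⟨rotated b, fun t _ => ⟨orthonormal_rotated b.orthonormal t, ?_⟩, ?_, ?_⟩
  · rw [eq_top_iff, ← b.dense_span]
    refine Submodule.topologicalClosure_mono (Submodule.span_le.mpr ?_)
    rintro _ ⟨n, rfl⟩
    exact mem_span_rotated b t n
  · intro n
    simp [rotated]
  · intro s hs t ht hst
    have hc := max_abs_cos_sin_lt_one (d := t - s) (sub_ne_zero.mpr hst.symm)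
      (by linarith [hs.2, ht.1]) (by linarith [hs.1, ht.2])
    refine ⟨1 - max |Real.cos (t - s)| |Real.sin (t - s)|, sub_pos.mpr hc, fun n m α hα => ?_⟩
    have hn : ‖rotated b t n‖ = 1 := (orthonormal_rotated b.orthonormal t).1 n
    have hle := norm_inner_rotated_le b.orthonormal s t n m
    have hcs := norm_inner_le_norm (𝕜 := ℂ) (rotated b t n) (rotated b t n - α • rotated b s m)
    rw [hn, one_mul, inner_sub_right, inner_smul_right, inner_self_eq_norm_sq_to_K, hn] at hcs
    have htri := norm_sub_norm_le (1 : ℂ) (α * inner ℂ (rotated b t n) (rotated b s m))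
    rw [norm_mul, hα, one_mul, norm_one] at htri
    norm_num at hcs
    linarith
end

section
/- Let I be an operator ideal with F(H) ⊊ I ⊆ K(H) (so I contains an operator of infinite rank). Then there exists a self-adjoint operator X ∈ I that is not U_I(H)-diagonalizable with respect to the basis b; that is, there is no W ∈ U_I(H) and no self-adjoint D ∈ 𝒟 ∩ I with X = WDW*. In particular, 𝒟_I^{sa} is a proper subset of I^{sa}. -/
open Filter Topology
open scoped InnerProductSpace

section

variable {H : Type*} [NormedAddCommGroup H] [InnerProductSpace ℂ H] [CompleteSpace H]


/-- A compact operator takes arbitrarily small values along an orthonormal sequence. -/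
lemma exists_norm_apply_lt {u : ℕ → H} (hu : Orthonormal ℂ u) (K : H →L[ℂ] H)
    (hK : IsCompactOperator K) {ε : ℝ} (hε : 0 < ε) : ∃ n, ‖K (u n)‖ < ε := by
  obtain ⟨C, hC, hsub⟩ := hK.image_closedBall_subset_compact (f := (K : H →ₗ[ℂ] H)) 1
  have hmem : ∀ n, K (u n) ∈ C := fun n =>
    hsub ⟨u n, by simp [hu.1 n], rfl⟩
  obtain ⟨y, -, φ, hφ, hlim⟩ := hC.tendsto_subseq hmem
  -- The limit `y` is zero: `⟪y, K (u n)⟫ = ⟪K* y, u n⟫` tends to zero by Bessel's inequality.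
  have hweak : Tendsto (fun n => ⟪u n, star K y⟫_ℂ) atTop (𝓝 0) := by
    have h := (hu.inner_products_summable (star K y)).tendsto_atTop_zero
    rw [tendsto_zero_iff_norm_tendsto_zero]
    have h2 := h.sqrt
    simpa using h2
  have h1 : Tendsto (fun n => ⟪K (u (φ n)), y⟫_ℂ) atTop (𝓝 ⟪y, y⟫_ℂ) :=
    hlim.inner tendsto_const_nhds
  have h2 : Tendsto (fun n => ⟪K (u (φ n)), y⟫_ℂ) atTop (𝓝 0) := by
    have h := hweak.comp hφ.tendsto_atTop
    refine h.congr fun n => ?_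
    simp [ContinuousLinearMap.star_eq_adjoint, ContinuousLinearMap.adjoint_inner_right]
  have hy : y = 0 := inner_self_eq_zero.1 (tendsto_nhds_unique h1 h2)
  have hn := hlim.norm
  rw [hy, norm_zero] at hn
  obtain ⟨n, hn⟩ := (hn.eventually (gt_mem_nhds hε)).exists
  exact ⟨φ n, hn⟩

/-- Outside finitely many directions an infinite-rank operator is still nonzero, so an orthonormal
sequence with nonzero, pairwise orthogonal images can be chosen greedily. -/
lemma exists_orthonormal_seq (T : H →L[ℂ] H)
    (hT : ¬ FiniteDimensional ℂ (LinearMap.range (T : H →ₗ[ℂ] H))) :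
    ∃ e : ℕ → H, Orthonormal ℂ e ∧ (∀ n, T (e n) ≠ 0) ∧
      ∀ m n, m ≠ n → ⟪T (e m), T (e n)⟫_ℂ = 0 := by
  obtain ⟨e, hP, hr⟩ := exists_seq_of_forall_finset_exists
    (fun u : H => ‖u‖ = 1 ∧ T u ≠ 0)
    (fun x y => ⟪x, y⟫_ℂ = 0 ∧ ⟪T x, T y⟫_ℂ = 0) (by
      intro s _
      set S : Set H := (s : Set H) ∪ (star T * T) '' s
      have hSfin : S.Finite := s.finite_toSet.union (s.finite_toSet.image _)
      set M : Submodule ℂ H := Submodule.span ℂ S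
      have : FiniteDimensional ℂ M := FiniteDimensional.span_of_finite ℂ hSfin
      obtain ⟨u, huM, hTu⟩ : ∃ u ∈ Mᗮ, T u ≠ 0 := by
        by_contra! hcon
        apply hT
        have hle : LinearMap.range (T : H →ₗ[ℂ] H) ≤ M.map (T : H →ₗ[ℂ] H) := by
          rintro _ ⟨x, rfl⟩
          obtain ⟨m, hm, m', hm', rfl⟩ := M.exists_add_mem_mem_orthogonal x
          exact ⟨m, hm, by simp [hcon m' hm']⟩
        exact Submodule.finiteDimensional_of_le hle
      have hu0 : u ≠ 0 := by rintro rfl; simp at hTu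
      have hn : ‖u‖ ≠ 0 := norm_ne_zero_iff.2 hu0
      refine ⟨((‖u‖⁻¹ : ℝ) : ℂ) • u, ⟨?_, ?_⟩, fun x hx => ⟨?_, ?_⟩⟩
      · simp [norm_smul, hn]
      · simp [hn, hTu]
      · rw [inner_smul_right, huM x (Submodule.subset_span (Or.inl hx)), mul_zero]
      · have h := huM _ (Submodule.subset_span (Or.inr ⟨x, hx, rfl⟩))
        simp only [mul_apply_eq_comp, ContinuousLinearMap.star_eq_adjoint,
          ContinuousLinearMap.adjoint_inner_left] at h
        rw [map_smul, inner_smul_right, h, mul_zero])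
  have hsym : ∀ m n, m ≠ n → ⟪e m, e n⟫_ℂ = 0 ∧ ⟪T (e m), T (e n)⟫_ℂ = 0 := by
    intro m n hmn
    rcases lt_or_gt_of_ne hmn with h | h
    · exact hr m n h
    · exact ⟨inner_eq_zero_symm.1 (hr n m h).1, inner_eq_zero_symm.1 (hr n m h).2⟩
  exact ⟨e, ⟨fun n => (hP n).1, fun m n h => (hsym m n h).1⟩, fun n => (hP n).2,
    fun m n h => (hsym m n h).2⟩

lemma exists_clm_apply_basis (b : HilbertBasis ℕ ℂ H) {e : ℕ → H} (he : Orthonormal ℂ e) :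
    ∃ E : H →L[ℂ] H, ∀ n, E (b n) = e n := by
  refine ⟨(he.orthogonalFamily.linearIsometry.comp
    b.repr.toLinearIsometry).toContinuousLinearMap, fun n => ?_⟩
  change he.orthogonalFamily.linearIsometry (b.repr (b n)) = e n
  rw [b.repr_self, OrthogonalFamily.linearIsometry_apply_single]
  simp

lemma HilbertBasis.ext_inner {H : Type*} [NormedAddCommGroup H]
    [InnerProductSpace ℂ H] (b : HilbertBasis ℕ ℂ H) {x y : H}
    (h : ∀ m, ⟪b m, x⟫_ℂ = ⟪b m, y⟫_ℂ) : x = y := by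
  apply b.repr.injective
  ext m
  simpa [b.repr_apply_apply] using h m

/-- A self-adjoint element of the ideal whose range contains every `b (2n) + b (2n+1)` and whose
kernel contains every `b (2n) - b (2n+1)`. -/
lemma exists_twisted (b : HilbertBasis ℕ ℂ H)
    (I : Set (H →L[ℂ] H)) (hI : IsOperatorIdeal I)
    (hFlt : ∃ T ∈ I, ¬ FiniteDimensional ℂ (LinearMap.range (T : H →ₗ[ℂ] H))) :
    ∃ X ∈ I, star X = X ∧ (∀ n, ∃ c : ℂ, c ≠ 0 ∧
      X (b (2 * n)) = c • (b (2 * n) + b (2 * n + 1))) ∧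
      ∀ n, X (b (2 * n) - b (2 * n + 1)) = 0 := by
  obtain ⟨T, hTI, hT⟩ := hFlt
  obtain ⟨e, he, hTe, horth⟩ := exists_orthonormal_seq T hT
  obtain ⟨E, hE⟩ := exists_clm_apply_basis b he
  obtain ⟨S₀, hS₀⟩ := exists_clm_apply_basis b
    (b.orthonormal.comp (fun n => 2 * n) fun m n h => by simpa using h)
  obtain ⟨S₁, hS₁⟩ := exists_clm_apply_basis b
    (b.orthonormal.comp (fun n => 2 * n + 1) fun m n h => by simpa using h)
  set F := S₀ + S₁ with hF
  have hFb : ∀ n, F (b n) = b (2 * n) + b (2 * n + 1) := fun n => by simp [hF, hS₀, hS₁]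
  have hb := orthonormal_iff_ite.1 b.orthonormal
  have hF0 : ∀ n, star F (b (2 * n)) = b n := fun n => b.ext_inner fun m => by
    rw [ContinuousLinearMap.star_eq_adjoint, ContinuousLinearMap.adjoint_inner_right, hFb,
      inner_add_left, hb, hb, hb, if_neg (by omega : ¬ 2 * m + 1 = 2 * n)]
    simp
  have hF1 : ∀ n, star F (b (2 * n + 1)) = b n := fun n => b.ext_inner fun m => by
    rw [ContinuousLinearMap.star_eq_adjoint, ContinuousLinearMap.adjoint_inner_right, hFb,
      inner_add_left, hb, hb, hb, if_neg (by omega : ¬ 2 * m = 2 * n + 1)]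
    simp
  have hA : ∀ n, star E (star T (T (e n))) = ⟪T (e n), T (e n)⟫_ℂ • b n := fun n =>
    b.ext_inner fun m => by
      rw [ContinuousLinearMap.star_eq_adjoint, ContinuousLinearMap.star_eq_adjoint,
        ContinuousLinearMap.adjoint_inner_right, ContinuousLinearMap.adjoint_inner_right, hE,
        inner_smul_right, hb]
      by_cases h : m = n
      · simp [h]
      · simp [h, horth m n h]
  refine ⟨F * (star E * (star T * T * (E * star F))), ?_, ?_, fun n => ?_, fun n => ?_⟩
  · have hmul := hI.2.2.2
    exact (hmul _ _ (hmul _ _ (hmul _ _ (hmul _ _ hTI).1).2).1).1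
  · simp only [star_mul, star_star, mul_assoc]
  · refine ⟨⟪T (e n), T (e n)⟫_ℂ, inner_self_ne_zero.2 (hTe n), ?_⟩
    simp only [mul_apply_eq_comp, hF0, hE, hA, map_smul, hFb]
  · simp only [mul_apply_eq_comp, map_sub, hF0, hF1, sub_self]

end

/-- Let `I` be an operator ideal with `F(H) ⊊ I ⊆ K(H)` (so `I` contains an
operator of infinite rank).  Then there exists a self-adjoint `X ∈ I` which is not
`U_I(H)`-diagonalizable with respect to the basis `b`: there is no unitary `W` with
`W - 1 ∈ I` and no self-adjoint diagonal `D ∈ I` such that `X = W D W*`.  In particular,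
`𝒟_I^{sa}` is a proper subset of `I^{sa}`. -/
theorem exists_selfAdjoint_not_restricted_diagonalizable
    {H : Type*} [NormedAddCommGroup H] [InnerProductSpace ℂ H] [CompleteSpace H]
    (b : HilbertBasis ℕ ℂ H)
    (I : Set (H →L[ℂ] H)) (hI : IsOperatorIdeal I)
    (hFI : ∀ T : H →L[ℂ] H,
      FiniteDimensional ℂ (LinearMap.range (T : H →ₗ[ℂ] H)) → T ∈ I)
    (hFlt : ∃ T ∈ I, ¬ FiniteDimensional ℂ (LinearMap.range (T : H →ₗ[ℂ] H)))
    (hIK : ∀ T ∈ I, IsCompactOperator (T : H →L[ℂ] H)) :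
    ∃ X ∈ I, star X = X ∧
      ¬ ∃ (W D : H →L[ℂ] H), W ∈ unitary (H →L[ℂ] H) ∧ W - 1 ∈ I ∧
        D ∈ I ∧ star D = D ∧ (∀ n : ℕ, ∃ c : ℂ, D (b n) = c • b n) ∧
        X = W * D * star W := by
  obtain ⟨X, hXI, hX, hf, hg⟩ := exists_twisted b I hI hFlt
  refine ⟨X, hXI, hX, ?_⟩
  rintro ⟨W, D, hW, hWI, -, -, hD, hXW⟩
  obtain ⟨n, hn⟩ := exists_norm_apply_lt
    (b.orthonormal.comp (fun n => 2 * n) fun m n h => by simpa using h)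
    (W - 1) (hIK _ hWI) (ε := 1 / 2) (by norm_num)
  obtain ⟨d, hd⟩ := hD (2 * n)
  set v := W (b (2 * n)) with hv
  have hXv : X v = d • v := by
    have h : X * W = W * D := by
      rw [hXW, mul_assoc, Unitary.star_mul_self_of_mem hW, mul_one]
    calc X v = (X * W) (b (2 * n)) := rfl
      _ = d • v := by rw [h, mul_apply_eq_comp, hd, map_smul]
  have hvb : ‖v - b (2 * n)‖ < 1 / 2 := by simpa [hv] using hn
  have hb := orthonormal_iff_ite.1 b.orthonormal
  have hsymm : ∀ x y, ⟪X x, y⟫_ℂ = ⟪x, X y⟫_ℂ := fun x y => by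
    rw [← ContinuousLinearMap.adjoint_inner_right, ← ContinuousLinearMap.star_eq_adjoint, hX]
  have hnorm : ∀ k, ‖b k‖ = 1 := b.orthonormal.1
  have key : ∀ w : H, ‖w‖ ≤ 2 → ⟪w, b (2 * n)⟫_ℂ = 1 → ⟪w, v⟫_ℂ ≠ 0 := by
    intro w hw hw1 hw0
    have h1 : ⟪w, v - b (2 * n)⟫_ℂ = -1 := by rw [inner_sub_right, hw0, hw1, zero_sub]
    have h2 := norm_inner_le_norm (𝕜 := ℂ) w (v - b (2 * n))
    rw [h1, norm_neg, norm_one] at h2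
    nlinarith [norm_nonneg w, norm_nonneg (v - b (2 * n))]
  by_cases hd0 : d = 0
  · obtain ⟨c, hc, hXc⟩ := hf n
    refine key (b (2 * n) + b (2 * n + 1)) ?_ ?_ ?_
    · refine (norm_add_le _ _).trans ?_
      rw [hnorm, hnorm]; norm_num
    · rw [inner_add_left, hb, hb]; simp
    · have h := hsymm (b (2 * n)) v
      rw [hXc, hXv, hd0, zero_smul, inner_zero_right, inner_smul_left] at h
      exact (mul_eq_zero.1 h).resolve_left (by simpa using hc)
  · refine key (b (2 * n) - b (2 * n + 1)) ?_ ?_ ?_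
    · refine (norm_sub_le _ _).trans ?_
      rw [hnorm, hnorm]; norm_num
    · rw [inner_sub_left, hb, hb]; simp
    · have h := hsymm (b (2 * n) - b (2 * n + 1)) v
      rw [hg, hXv, inner_zero_left, inner_smul_right] at h
      exact (mul_eq_zero.1 h.symm).resolve_left hd0
end

section
/- Let I be any operator ideal in B(H). If X ∈ I and WXW⁻¹ = D for some W ∈ U_I(H) and some D diagonal with respect to the basis b, then X is a normal operator and X − D belongs to I², the linear span of {AB : A, B ∈ I}. -/
/-!
Write `W = 1 + K` with `K ∈ I`. The hypothesis `W X W* = D` says `W X = D W`, that is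
`X - D = D K - K X`. Both products lie in `I²`, since `D = W X W*` is in `I` along with `X`.

A diagonal operator is normal (`diagonal_normal`): `D* bₙ = conj cₙ • bₙ` whenever `D bₙ = cₙ • bₙ`,
so `D* D` and `D D*` agree on the orthonormal basis. Normality passes to `X = W* D W`.
-/

theorem clm_ext_hilbertBasis
    {H : Type*} [NormedAddCommGroup H] [InnerProductSpace ℂ H]
    (b : HilbertBasis ℕ ℂ H) {S T : H →L[ℂ] H} (h : ∀ n, S (b n) = T (b n)) : S = T := by
  refine ContinuousLinearMap.ext_on (s := Set.range b) ?_ ?_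
  · rw [dense_iff_closure_eq, ← Submodule.topologicalClosure_coe, b.dense_span]
    rfl
  · rintro _ ⟨n, rfl⟩
    exact h n

theorem diagonal_normal
    {H : Type*} [NormedAddCommGroup H] [InnerProductSpace ℂ H] [CompleteSpace H]
    (b : HilbertBasis ℕ ℂ H) (D : H →L[ℂ] H)
    (hDdiag : ∀ n : ℕ, ∃ c : ℂ, D (b n) = c • b n) :
    star D * D = D * star D := by
  choose c hc using hDdiag
  have hstar : ∀ n, star D (b n) = (starRingEnd ℂ) (c n) • b n := by
    intro n
    apply b.repr.injective
    ext m
    rw [b.repr_apply_apply, b.repr_apply_apply, ContinuousLinearMap.star_eq_adjoint,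
      ContinuousLinearMap.adjoint_inner_right, hc, inner_smul_left, inner_smul_right]
    by_cases hmn : m = n
    · rw [hmn]
    · rw [b.orthonormal.2 hmn, mul_zero, mul_zero]
  refine clm_ext_hilbertBasis b fun n => ?_
  simp only [ContinuousLinearMap.mul_apply, hc, hstar, map_smul]
  rw [smul_comm]

/-- Let `I` be any operator ideal in `B(H)`.  If `X ∈ I` and
`W X W⁻¹ = D` for some `W ∈ U_I(H)` and some `D` which is diagonal with respect to the basis
`b`, then `X` is normal and `X - D` belongs to `I²`, the linear span of `{AB : A, B ∈ I}`. -/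
theorem normal_and_sub_diagonal_mem_ideal_squared
    {H : Type*} [NormedAddCommGroup H] [InnerProductSpace ℂ H] [CompleteSpace H]
    (b : HilbertBasis ℕ ℂ H)
    (I : Set (H →L[ℂ] H)) (hI : IsOperatorIdeal I)
    (X : H →L[ℂ] H) (hX : X ∈ I)
    (W : H →L[ℂ] H) (hW : W ∈ unitary (H →L[ℂ] H)) (hWI : W - 1 ∈ I)
    (D : H →L[ℂ] H) (hDdiag : ∀ n : ℕ, ∃ c : ℂ, D (b n) = c • b n)
    (hWXW : W * X * star W = D) :
    star X * X = X * star X ∧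
      X - D ∈ Submodule.span ℂ {T : H →L[ℂ] H | ∃ A ∈ I, ∃ B ∈ I, A * B = T} := by
  obtain ⟨-, -, -, hmul⟩ := hI
  have hW1 : star W * W = 1 := Unitary.star_mul_self_of_mem hW
  have hW2 : W * star W = 1 := Unitary.mul_star_self_of_mem hW
  have hDI : D ∈ I := hWXW ▸ (hmul (star W) _ (hmul W X hX).1).2
  have hDW : D * W = W * X := by
    rw [← hWXW, mul_assoc, hW1, mul_one]
  constructor
  · have hXD : X = star W * D * W := by
      rw [mul_assoc, hDW, ← mul_assoc, hW1, one_mul]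
    have hN := diagonal_normal b D hDdiag
    -- Conjugating either product of `D` and `D*` by `W` gives the product of `X` and `X*`.
    have key : ∀ S T : H →L[ℂ] H,
        (star W * S * W) * (star W * T * W) = star W * (S * T) * W := by
      intro S T
      calc (star W * S * W) * (star W * T * W)
          = star W * S * (W * star W) * T * W := by simp only [mul_assoc]
        _ = star W * (S * T) * W := by rw [hW2]; simp only [mul_assoc, one_mul]
    have hXs : star X = star W * star D * W := by
      rw [hXD]; simp only [star_mul, star_star, mul_assoc]
    rw [hXs, hXD, key, key, hN]
  · have hdiff : X - D = D * (W - 1) - (W - 1) * X := by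
      rw [mul_sub, sub_mul, hDW, mul_one, one_mul]
      abel
    rw [hdiff]
    exact Submodule.sub_mem _
      (Submodule.subset_span ⟨D, hDI, W - 1, hWI, rfl⟩)
      (Submodule.subset_span ⟨W - 1, hWI, X, hX, rfl⟩)
end

section
/- There exists an injective linear map Π : B(H) → B(H) with the following properties: (i) Π(RST) = Π(R)Π(S)Π(T) for all R, S, T ∈ B(H); (ii) for all S, T ∈ B(H), ST = TS if and only if Π(S)Π(T) = Π(T)Π(S); (iii) Π(T*) = Π(T)* for every T ∈ B(H); (iv) the only positive operator in the range of Π is 0; (v) for any two operator ideals I₁, I₂ of B(H), I₁ ⊆ I₂ if and only if Π(I₁) ⊆ Π(I₂); (vi) for every operator ideal I of B(H): Π(I) ⊆ I, Π⁻¹(I) ⊆ I, and for every A ∈ B(H), if Π(A) = WDW* for some W ∈ U_I(H) and some D ∈ 𝒟 ∩ I, then A belongs to I², the linear span of {XY : X, Y ∈ I}. -/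
open scoped ComplexOrder

/-- An operator vanishes as soon as all its matrix entries in a Hilbert basis do. -/
lemma HilbertBasis.clm_eq_zero {H : Type*} [NormedAddCommGroup H] [InnerProductSpace ℂ H]
    (b : HilbertBasis ℕ ℂ H) (X : H →L[ℂ] H)
    (h : ∀ m n, inner ℂ (b m) (X (b n)) = 0) : X = 0 := by
  refine ContinuousLinearMap.ext_on (s := Set.range b)
    (Submodule.dense_iff_topologicalClosure_eq_top.2 b.dense_span) ?_
  rintro _ ⟨n, rfl⟩
  refine b.repr.injective (lp.ext (funext fun m => ?_))
  simpa [b.repr_apply_apply] using h m n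

/-- An injective map of indices induces an isometry `V` of `H` with `V b_n = b_{f n}`. -/
lemma HilbertBasis.exists_isometry {H : Type*} [NormedAddCommGroup H] [InnerProductSpace ℂ H]
    [CompleteSpace H] (b : HilbertBasis ℕ ℂ H) (f : ℕ → ℕ) (hf : Function.Injective f) :
    ∃ V : H →L[ℂ] H, star V * V = 1 ∧ ∀ n, V (b n) = b (f n) := by
  have ho : Orthonormal ℂ (b ∘ f) := b.orthonormal.comp f hf
  let L : H →ₗᵢ[ℂ] H :=
    ho.orthogonalFamily.linearIsometry.comp b.repr.toLinearIsometry
  refine ⟨L.toContinuousLinearMap, ?_, fun n => ?_⟩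
  · ext x
    refine ext_inner_left ℂ fun y => ?_
    rw [ContinuousLinearMap.star_eq_adjoint, mul_apply_eq_comp,
      ContinuousLinearMap.adjoint_inner_right]
    simp
  · simp [L, b.repr_self, OrthogonalFamily.linearIsometry_apply_single]

/-- The off-diagonal embedding `T ↦ U T V* + V T U*`. -/
noncomputable def offDiag {H : Type*} [NormedAddCommGroup H] [InnerProductSpace ℂ H]
    [CompleteSpace H] (U V : H →L[ℂ] H) : (H →L[ℂ] H) →ₗ[ℂ] (H →L[ℂ] H) where
  toFun T := U * T * star V + V * T * star U
  map_add' S T := by noncomm_ring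
  map_smul' c T := by simp

/-- There exists an injective linear map `P : B(H) → B(H)` such that:
(i) `P (RST) = P R * P S * P T`; (ii) `S` and `T` commute iff `P S` and `P T` commute;
(iii) `P (T*) = (P T)*`; (iv) the only positive operator in the range of `P` is `0`;
(v) for ideals `I₁, I₂`, `I₁ ⊆ I₂` iff `P '' I₁ ⊆ P '' I₂`; (vi) for every ideal `I`:
`P '' I ⊆ I`, `P⁻¹ I ⊆ I`, and whenever `P A = W D W*` with `W ∈ U_I(H)` and `D ∈ 𝒟 ∩ I`,
one has `A ∈ I²` (the linear span of products of two elements of `I`). -/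
theorem exists_triple_system_homomorphism
    {H : Type*} [NormedAddCommGroup H] [InnerProductSpace ℂ H] [CompleteSpace H]
    (b : HilbertBasis ℕ ℂ H) :
    ∃ P : (H →L[ℂ] H) →ₗ[ℂ] (H →L[ℂ] H),
      Function.Injective P ∧
      (∀ R S T : H →L[ℂ] H, P (R * S * T) = P R * P S * P T) ∧
      (∀ S T : H →L[ℂ] H, S * T = T * S ↔ P S * P T = P T * P S) ∧
      (∀ T : H →L[ℂ] H, P (star T) = star (P T)) ∧
      (∀ T : H →L[ℂ] H, (P T).IsPositive → P T = 0) ∧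
      (∀ I₁ I₂ : Set (H →L[ℂ] H), IsOperatorIdeal I₁ → IsOperatorIdeal I₂ →
        (I₁ ⊆ I₂ ↔ P '' I₁ ⊆ P '' I₂)) ∧
      (∀ I : Set (H →L[ℂ] H), IsOperatorIdeal I →
        (∀ T ∈ I, P T ∈ I) ∧
        (∀ T : H →L[ℂ] H, P T ∈ I → T ∈ I) ∧
        (∀ A W D : H →L[ℂ] H, W ∈ unitary (H →L[ℂ] H) → W - 1 ∈ I → D ∈ I →
          (∀ n : ℕ, ∃ c : ℂ, D (b n) = c • b n) →
          P A = W * D * star W →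
          A ∈ Submodule.span ℂ {T : H →L[ℂ] H | ∃ X ∈ I, ∃ Y ∈ I, X * Y = T})) := by
  obtain ⟨U, hU, hUb⟩ := b.exists_isometry (fun n => 2 * n) (fun m n h => by simpa using h)
  obtain ⟨V, hV, hVb⟩ := b.exists_isometry (fun n => 2 * n + 1) (fun m n h => by simpa using h)
  -- Diagonal operators have no entries between the even and the odd basis vectors.
  have hdiag : ∀ D : H →L[ℂ] H, (∀ n : ℕ, ∃ c : ℂ, D (b n) = c • b n) →
      star U * D * V = 0 := by
    intro D hD
    refine b.clm_eq_zero _ fun m n => ?_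
    obtain ⟨c, hc⟩ := hD (2 * n + 1)
    rw [ContinuousLinearMap.star_eq_adjoint, mul_apply_eq_comp,
      mul_apply_eq_comp, ContinuousLinearMap.adjoint_inner_right, hUb, hVb, hc,
      inner_smul_right, b.orthonormal.inner_eq_zero (by omega), mul_zero]
  have hUV : star U * V = 0 := by
    simpa using hdiag 1 fun n => ⟨1, by simp⟩
  have hVU : star V * U = 0 := by
    simpa using congrArg star hUV
  have hU' : ∀ X, star U * (U * X) = X := fun X => by rw [← mul_assoc, hU, one_mul]
  have hV' : ∀ X, star V * (V * X) = X := fun X => by rw [← mul_assoc, hV, one_mul]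
  have hUV' : ∀ X, star U * (V * X) = 0 := fun X => by rw [← mul_assoc, hUV, zero_mul]
  have hVU' : ∀ X, star V * (U * X) = 0 := fun X => by rw [← mul_assoc, hVU, zero_mul]
  have hP : ∀ T, offDiag U V T = U * T * star V + V * T * star U := fun _ => rfl
  have hleft : ∀ T, star U * offDiag U V T * V = T := fun T => by
    simp [hP, mul_add, mul_assoc, hU', hUV', hV]
  have hinj : Function.Injective (offDiag U V) := fun S T h => by
    rw [← hleft S, h, hleft]
  have hmul : ∀ S T, offDiag U V S * offDiag U V T
      = U * (S * T) * star U + V * (S * T) * star V := fun S T => by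
    simp [hP, mul_add, add_mul, mul_assoc, hU', hUV', hV', hVU', add_comm]
  refine ⟨offDiag U V, hinj, ?_, ?_, ?_, ?_, ?_, ?_⟩
  · intro R S T
    rw [hmul]
    simp [hP, mul_add, add_mul, mul_assoc, hU', hUV', hV', hVU']
  · intro S T
    rw [hmul, hmul]
    refine ⟨fun h => by rw [h], fun h => ?_⟩
    simpa [mul_add, add_mul, mul_assoc, hU', hUV', hU]
      using congrArg (fun X => star U * X * U) h
  · intro T
    simp [hP, mul_assoc, add_comm]
  · intro T hT
    let J : H →L[ℂ] H := U * star U - V * star V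
    have hJ : J * offDiag U V T * star J = -offDiag U V T := by
      simp [J, hP, mul_add, add_mul, mul_sub, sub_mul, mul_assoc, hU', hUV', hV', hVU']
      abel
    have hneg : (-offDiag U V T).IsPositive := by
      rw [← hJ]
      exact hT.conj_adjoint J
    refine le_antisymm ?_ ((ContinuousLinearMap.nonneg_iff_isPositive _).2 hT)
    exact neg_nonneg.1 ((ContinuousLinearMap.nonneg_iff_isPositive _).2 hneg)
  · intro I₁ I₂ _ _
    exact (Set.image_subset_image_iff hinj).symm
  · rintro I ⟨-, hadd, -, hmulI⟩
    refine ⟨fun T hT => ?_, fun T hT => ?_, fun A W D hW hK hD hDb hA => ?_⟩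
    · exact hadd _ _ (hmulI _ _ (hmulI _ _ hT).1).2 (hmulI _ _ (hmulI _ _ hT).1).2
    · rw [← hleft T]
      exact (hmulI _ _ (hmulI _ _ hT).1).2
    · have hK' : star W - 1 ∈ I := by
        have : star W - 1 = -star W * (W - 1) := by
          rw [mul_sub, neg_mul, (Unitary.mem_iff.1 hW).1]
          noncomm_ring
        rw [this]
        exact (hmulI _ _ hK).1
      have hdec : A = (star U * (W - 1)) * (D * star W * V)
          + (star U * D) * ((star W - 1) * V) := by
        calc A = star U * (W * D * star W) * V - star U * D * V := by
              rw [hdiag D hDb, sub_zero, ← hA, hleft]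
          _ = _ := by noncomm_ring
      rw [hdec]
      refine Submodule.add_mem _ (Submodule.subset_span ⟨_, (hmulI _ _ hK).1, _, ?_, rfl⟩)
        (Submodule.subset_span ⟨_, (hmulI _ _ hD).1, _, (hmulI _ _ hK').2, rfl⟩)
      exact (hmulI _ _ (hmulI _ _ hD).2).2
end

section
/- Let I ⊆ J be operator ideals with {0} ≠ I and J ⊆ K(H). If C is a Cartan subalgebra of J, then C ∩ I is a Cartan subalgebra of I. -/
/-- `C` is a self-adjoint complex-linear subspace of `I` consisting of mutually
commuting operators. -/
def IsCommSelfAdjointSubspace {H : Type*} [NormedAddCommGroup H] [InnerProductSpace ℂ H]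
    [CompleteSpace H] (I C : Set (H →L[ℂ] H)) : Prop :=
  C ⊆ I ∧
  (0 : H →L[ℂ] H) ∈ C ∧
  (∀ S T : H →L[ℂ] H, S ∈ C → T ∈ C → S + T ∈ C) ∧
  (∀ (c : ℂ) (T : H →L[ℂ] H), T ∈ C → c • T ∈ C) ∧
  (∀ T ∈ C, star T ∈ C) ∧
  (∀ S T : H →L[ℂ] H, S ∈ C → T ∈ C → S * T = T * S)

/-- `C` is a Cartan subalgebra of the operator ideal `I`. -/
def IsCartanSubalgebra {H : Type*} [NormedAddCommGroup H] [InnerProductSpace ℂ H]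
    [CompleteSpace H] (I C : Set (H →L[ℂ] H)) : Prop :=
  IsCommSelfAdjointSubspace I C ∧
  ∀ C' : Set (H →L[ℂ] H), IsCommSelfAdjointSubspace I C' → C ⊆ C' → C' = C

open Module.End InnerProductSpace

section CartanAux

variable {H : Type*} [NormedAddCommGroup H] [InnerProductSpace ℂ H]

/-- A nonzero operator ideal contains every finite-rank orthogonal projection. With `T u ≠ 0`,
each rank-one operator `|e⟩⟨e|` is a multiple of `|e⟩⟨T u| T |u⟩⟨e|`. -/
lemma starProjection_mem_ideal {I : Set (H →L[ℂ] H)} (hI : IsOperatorIdeal I)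
    (hInz : ∃ T ∈ I, T ≠ (0 : H →L[ℂ] H)) (U : Submodule ℂ H) [FiniteDimensional ℂ U] :
    U.starProjection ∈ I := by
  obtain ⟨h0, hadd, hsmul, hmul⟩ := hI
  obtain ⟨T, hT, hne⟩ := hInz
  obtain ⟨u, hu⟩ : ∃ u, T u ≠ 0 := by
    by_contra! h
    exact hne (ContinuousLinearMap.ext h)
  have hrank : ∀ e : H, rankOne ℂ e e ∈ I := by
    intro e
    have h1 := hsmul (inner ℂ (T u) (T u))⁻¹ _
      (hmul (rankOne ℂ e (T u)) _ (hmul (rankOne ℂ u e) T hT).2).1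
    have hne' : inner ℂ (T u) (T u) ≠ 0 := inner_self_ne_zero.mpr hu
    convert h1 using 1
    ext z
    simp only [rankOne_apply, smul_apply, mul_apply_eq_comp,
      map_smul, smul_smul]
    congr 1
    field_simp
  rw [(stdOrthonormalBasis ℂ U).starProjection_eq_sum_rankOne]
  exact Finset.sum_induction _ (· ∈ I) hadd h0 fun i _ => hrank _

variable [CompleteSpace H]

/-- Maximality of a Cartan subalgebra: adjoining `X` and `star X` to `C` gives a commuting
self-adjoint subspace of `J`, hence nothing new. -/
lemma mem_of_commute {J C : Set (H →L[ℂ] H)} (hJ : IsOperatorIdeal J)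
    (hC : IsCartanSubalgebra J C) {X : H →L[ℂ] H} (hX : X ∈ J) (hX' : star X ∈ J)
    (hn : Commute X (star X)) (hcomm : ∀ S ∈ C, Commute X S) : X ∈ C := by
  obtain ⟨⟨hCJ, hC0, hCadd, hCsmul, hCstar, hCcomm⟩, hmax⟩ := hC
  obtain ⟨-, hadd, hsmul, -⟩ := hJ
  have hcomm' : ∀ S ∈ C, Commute (star X) S := fun S hS => by
    simpa using (hcomm (star S) (hCstar S hS)).star_star
  let D : Set (H →L[ℂ] H) := {Y | ∃ S ∈ C, ∃ a c : ℂ, Y = S + a • X + c • star X}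
  have hD : D = C := by
    refine hmax D ⟨?_, ?_, ?_, ?_, ?_, ?_⟩ ?_
    · rintro _ ⟨S, hS, a, c, rfl⟩
      exact hadd _ _ (hadd _ _ (hCJ hS) (hsmul _ _ hX)) (hsmul _ _ hX')
    · exact ⟨0, hC0, 0, 0, by simp⟩
    · rintro _ _ ⟨S, hS, a, c, rfl⟩ ⟨S', hS', a', c', rfl⟩
      exact ⟨S + S', hCadd _ _ hS hS', a + a', c + c', by module⟩
    · rintro k _ ⟨S, hS, a, c, rfl⟩
      exact ⟨k • S, hCsmul _ _ hS, k * a, k * c, by module⟩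
    · rintro _ ⟨S, hS, a, c, rfl⟩
      refine ⟨star S, hCstar _ hS, star c, star a, ?_⟩
      simp only [star_add, star_smul, star_star]
      abel
    · rintro _ _ ⟨S, hS, a, c, rfl⟩ ⟨S', hS', a', c', rfl⟩
      have hSS : Commute S S' := hCcomm _ _ hS hS'
      refine Commute.eq (Commute.add_left (Commute.add_left ?_ ?_) ?_)
      · exact ((hSS.add_right ((hcomm S hS).symm.smul_right _))).add_right
          ((hcomm' S hS).symm.smul_right _)
      · exact ((((hcomm S' hS').add_right ((Commute.refl X).smul_right _))).add_right
          (hn.smul_right _)).smul_left _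
      · exact ((((hcomm' S' hS').add_right (hn.symm.smul_right _))).add_right
          ((Commute.refl (star X)).smul_right _)).smul_left _
    · exact fun S hS => ⟨S, hS, 0, 0, by simp⟩
  rw [← hD]
  exact ⟨0, hC0, 1, 0, by simp⟩

/-- An operator ideal contains the adjoint of each of its normal elements. -/
lemma star_mem_ideal {I : Set (H →L[ℂ] H)} (hI : IsOperatorIdeal I) {T : H →L[ℂ] H} (hT : T ∈ I)
    (hn : Commute T (star T)) : star T ∈ I := by
  have hnorm : ∀ x, ‖T x‖ = ‖(star T) x‖ :=
    ContinuousLinearMap.isStarNormal_iff_norm_eq_adjoint.mp ⟨hn.symm⟩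
  -- `V` sends `T x` to `T* x`, extends by continuity to the closure `K` of the range of `T`, and
  -- vanishes on the orthogonal complement of `K`.
  let K : Submodule ℂ H := T.range.topologicalClosure
  have hK : IsClosed (K : Set H) := Submodule.isClosed_topologicalClosure _
  have : CompleteSpace K := hK.completeSpace_coe
  have hmem : ∀ x, T x ∈ K := fun x => Submodule.le_topologicalClosure _ ⟨x, rfl⟩
  let e : H →ₗ[ℂ] K := LinearMap.codRestrict K T.toLinearMap hmem
  have he : ∀ x, (e x : H) = T x := fun x => rfl
  have hdense : DenseRange e := by
    intro y
    rw [closure_subtype, ← Set.range_comp]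
    exact y.2
  let f : H →ₗ[ℂ] H := (star T).toLinearMap
  have hbound : ∃ c : ℝ, ∀ x, ‖f x‖ ≤ c * ‖e x‖ :=
    ⟨1, fun x => by rw [one_mul]; exact (hnorm x).ge⟩
  have hV : star T = ((f.extendOfNorm e).comp K.orthogonalProjectionOnto) * T := by
    ext x
    have h1 : K.orthogonalProjectionOnto (T x) = e x :=
      Submodule.orthogonalProjectionOnto_mem_subspace_eq_self (e x)
    simp only [mul_apply_eq_comp, ContinuousLinearMap.comp_apply]
    rw [h1, LinearMap.extendOfNorm_eq hdense hbound]
    rfl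
  rw [hV]
  exact (hI.2.2.2 _ T hT).1

/-- An operator leaving `U` invariant together with its adjoint commutes with the orthogonal
projection onto `U`. -/
lemma commute_starProjection (U : Submodule ℂ H) [U.HasOrthogonalProjection] {S : H →L[ℂ] H}
    (h : ∀ x ∈ U, S x ∈ U) (h' : ∀ x ∈ U, (star S) x ∈ U) : Commute U.starProjection S := by
  have key : ∀ R : H →L[ℂ] H, (∀ x ∈ U, R x ∈ U) →
      U.starProjection * R * U.starProjection = R * U.starProjection := by
    intro R hR
    ext x
    simp only [mul_apply_eq_comp]
    exact Submodule.starProjection_eq_self_iff.mpr (hR _ (Submodule.starProjection_apply_mem U x))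
  have hP : star U.starProjection = U.starProjection := isSelfAdjoint_starProjection U
  have h1 := key S h
  have h2 := congrArg star (key (star S) h')
  simp only [star_mul, star_star, hP] at h2
  rw [commute_iff_eq, ← h2, ← mul_assoc, h1]

/-- The eigenprojections of a self-adjoint `T ∈ C` for nonzero eigenvalues lie in `C ∩ I`. -/
lemma eigenProjection_mem_inter {I J C : Set (H →L[ℂ] H)}
    (hI : IsOperatorIdeal I) (hJ : IsOperatorIdeal J) (hIJ : I ⊆ J)
    (hInz : ∃ T ∈ I, T ≠ (0 : H →L[ℂ] H)) (hC : IsCartanSubalgebra J C)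
    {T : H →L[ℂ] H} (hT : T ∈ C) (μ : ℂ)
    [FiniteDimensional ℂ (eigenspace T.toLinearMap μ)] :
    (eigenspace T.toLinearMap μ).starProjection ∈ C ∩ I := by
  have hPI := starProjection_mem_ideal hI hInz (eigenspace T.toLinearMap μ)
  have hP : star (eigenspace T.toLinearMap μ).starProjection
      = (eigenspace T.toLinearMap μ).starProjection := isSelfAdjoint_starProjection _
  have hinv : ∀ S ∈ C, ∀ x ∈ eigenspace T.toLinearMap μ, S x ∈ eigenspace T.toLinearMap μ := by
    intro S hS x hx
    rw [mem_eigenspace_iff] at hx ⊢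
    have h := DFunLike.congr_fun (hC.1.2.2.2.2.2 T S hT hS) x
    simp only [mul_apply_eq_comp, ContinuousLinearMap.coe_coe] at h hx ⊢
    rw [h, hx, map_smul]
  refine ⟨mem_of_commute hJ hC (hIJ hPI) (by rw [hP]; exact hIJ hPI) (by rw [hP]) ?_, hPI⟩
  intro S hS
  exact commute_starProjection _ (hinv S hS) (hinv _ (hC.1.2.2.2.2.1 S hS))

/-- An operator commuting with the eigenprojections of a compact self-adjoint `T` for all nonzero
eigenvalues commutes with `T`. -/
lemma commute_of_commute_eigenProjections {T X : H →L[ℂ] H} (hTc : IsCompactOperator T)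
    (hTs : IsSelfAdjoint T)
    (hX : ∀ (μ : ℂ) [(eigenspace T.toLinearMap μ).HasOrthogonalProjection], μ ≠ 0 →
      Commute X (eigenspace T.toLinearMap μ).starProjection) : Commute X T := by
  have hsymm : (T : H →ₗ[ℂ] H).IsSymmetric := hTs.isSymmetric
  have hbot := ContinuousLinearMap.orthogonalComplement_iSup_eigenspaces_eq_bot hTc hsymm
  have hon : ∀ μ : ℂ, ∀ v ∈ eigenspace T.toLinearMap μ, T (X v) = μ • X v := by
    intro μ v hv
    have hv' : T v = μ • v := mem_eigenspace_iff.mp hv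
    by_cases hμ : μ = 0
    · -- For `v ∈ ker T`, the vector `T (X v)` is orthogonal to every eigenspace of `T`.
      subst hμ
      rw [zero_smul]
      rw [zero_smul] at hv'
      have hmem : T (X v) ∈ (⨆ μ, eigenspace (T : Module.End ℂ H) μ)ᗮ := by
        rw [← Submodule.iInf_orthogonal, Submodule.mem_iInf]
        intro ν
        rw [Submodule.mem_orthogonal]
        intro w hw
        have hw' : T w = ν • w := mem_eigenspace_iff.mp hw
        have hs : inner ℂ (T w) (X v) = inner ℂ w (T (X v)) := hsymm w (X v)
        rw [← hs, hw']
        by_cases hν : ν = 0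
        · simp [hν]
        · have := ContinuousLinearMap.finite_dimensional_eigenspace hTc ν hν
          have hc := DFunLike.congr_fun (hX ν hν).eq v
          simp only [mul_apply_eq_comp] at hc
          have hvz : (eigenspace T.toLinearMap ν).starProjection v = 0 := by
            rw [Submodule.starProjection_apply_eq_zero_iff, Submodule.mem_orthogonal]
            intro y hy
            exact Submodule.isOrtho_iff_inner_eq.mp
              (hsymm.orthogonalFamily_eigenspaces.isOrtho hν) y hy v hv
          rw [hvz, map_zero] at hc
          have hXv := (Submodule.starProjection_apply_eq_zero_iff _).mp hc.symm
          rw [inner_smul_left, (Submodule.mem_orthogonal _ _).mp hXv w hw, mul_zero]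
      rw [hbot] at hmem
      simpa using hmem
    · have := ContinuousLinearMap.finite_dimensional_eigenspace hTc μ hμ
      have hc := DFunLike.congr_fun (hX μ hμ).eq v
      simp only [mul_apply_eq_comp] at hc
      rw [Submodule.starProjection_eq_self_iff.mpr hv] at hc
      exact mem_eigenspace_iff.mp (Submodule.starProjection_eq_self_iff.mp hc.symm)
  have hle : (⨆ μ, eigenspace (T : Module.End ℂ H) μ) ≤ (X * T - T * X).ker := by
    refine iSup_le fun μ v hv => ?_
    have hv' : T v = μ • v := mem_eigenspace_iff.mp hv
    simp [hv', hon μ v hv]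
  have htop : (X * T - T * X).ker = ⊤ := by
    have hcl : IsClosed ((X * T - T * X).ker : Set H) :=
      ContinuousLinearMap.isClosed_ker _
    have hd := (Submodule.topologicalClosure_eq_top_iff
      (K := ⨆ μ, eigenspace (T : Module.End ℂ H) μ)).mpr hbot
    exact top_le_iff.mp (hd ▸ Submodule.topologicalClosure_minimal _ hle hcl)
  rw [commute_iff_eq, ← sub_eq_zero]
  ext v
  have : v ∈ (X * T - T * X).ker := htop ▸ Submodule.mem_top
  simpa using this

end CartanAux

/-- Let `I ⊆ J` be operator ideals with `I ≠ {0}` and `J ⊆ K(H)`.  If `C`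
is a Cartan subalgebra of `J`, then `C ∩ I` is a Cartan subalgebra of `I`. -/
theorem cartan_inter_smaller_ideal
    {H : Type*} [NormedAddCommGroup H] [InnerProductSpace ℂ H] [CompleteSpace H]
    (b : HilbertBasis ℕ ℂ H)
    (I J : Set (H →L[ℂ] H))
    (hI : IsOperatorIdeal I) (hJ : IsOperatorIdeal J)
    (hIJ : I ⊆ J)
    (hInz : ∃ T ∈ I, T ≠ (0 : H →L[ℂ] H))
    (hJK : ∀ T ∈ J, IsCompactOperator (T : H →L[ℂ] H))
    (C : Set (H →L[ℂ] H)) (hC : IsCartanSubalgebra J C) :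
    IsCartanSubalgebra I (C ∩ I) := by
  have hCartan := hC
  obtain ⟨⟨hCJ, hC0, hCadd, hCsmul, hCstar, hCcomm⟩, -⟩ := hC
  -- An operator whose commutant contains `C ∩ I` commutes with all of `C`.
  have hcomm : ∀ X : H →L[ℂ] H, (∀ P ∈ C ∩ I, Commute X P) → ∀ T ∈ C, Commute X T := by
    intro X hX T hT
    have hsa : ∀ A ∈ C, IsSelfAdjoint A → Commute X A := by
      intro A hA hAs
      refine commute_of_commute_eigenProjections (hJK A (hCJ hA)) hAs fun μ _ hμ => hX _ ?_
      have := ContinuousLinearMap.finite_dimensional_eigenspace (hJK A (hCJ hA)) μ hμ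
      exact eigenProjection_mem_inter hI hJ hIJ hInz hCartan hA μ
    have h1 := hsa (T + star T) (hCadd _ _ hT (hCstar _ hT)) (IsSelfAdjoint.add_star_self T)
    have h2 := hsa (Complex.I • (T + (-1 : ℂ) • star T))
      (hCsmul _ _ (hCadd _ _ hT (hCsmul _ _ (hCstar _ hT)))) (by
        simp only [IsSelfAdjoint, star_smul, star_add, star_star, star_neg, star_one,
          Complex.star_def, Complex.conj_I]
        module)
    have h3 := (h1.add_right (h2.smul_right (-Complex.I))).smul_right (2⁻¹ : ℂ)
    have hdecomp : T = (2⁻¹ : ℂ) •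
        (T + star T + (-Complex.I) • (Complex.I • (T + (-1 : ℂ) • star T))) := by
      rw [smul_smul (-Complex.I), neg_mul, Complex.I_mul_I, neg_neg]
      module
    rw [hdecomp]
    exact h3
  have hself : ∀ T ∈ C ∩ I, star T ∈ C ∩ I := fun T hT =>
    ⟨hCstar T hT.1, star_mem_ideal hI hT.2 (hCcomm _ _ hT.1 (hCstar T hT.1))⟩
  refine ⟨⟨Set.inter_subset_right, ⟨hC0, hI.1⟩,
    fun S T hS hT => ⟨hCadd _ _ hS.1 hT.1, hI.2.1 _ _ hS.2 hT.2⟩,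
    fun c T hT => ⟨hCsmul _ _ hT.1, hI.2.2.1 _ _ hT.2⟩, hself,
    fun S T hS hT => hCcomm _ _ hS.1 hT.1⟩, ?_⟩
  rintro C' ⟨hC'I, -, -, -, hC'star, hC'comm⟩ hsub
  refine Set.Subset.antisymm (fun X hX => ⟨?_, hC'I hX⟩) hsub
  exact mem_of_commute hJ hCartan (hIJ (hC'I hX)) (hIJ (hC'I (hC'star X hX)))
    (hC'comm _ _ hX (hC'star X hX)) (hcomm X fun P hP => hC'comm _ _ hX (hsub hP))
end

section
/- Let I and J be operator ideals with {0} ⊊ I ⊊ J ⊊ B(H). Then there exists an uncountable family (C_α)_{α ∈ (0,1]} of Cartan subalgebras of J such that: (a) for all α, β ∈ (0,1] there exists W ∈ U_J(H) with W C_α W* = C_β (the C_α are pairwise U_J(H)-conjugate); (b) each C_α ∩ I is a Cartan subalgebra of I; and (c) whenever α ≠ β, there is no W ∈ U_I(H) with W (C_α ∩ I) W* = C_β ∩ I. -/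
/-!
Let `D = diag(θ)` be a diagonal operator with respect to the basis `b`, with entries in `[0, 1]`,
lying in `J` but not in `I`. It exists because a proper ideal consists of compact operators
(`isCompactOperator_of_mem_proper`) and a compact operator generates the same ideal as the diagonal
operator of its singular values (`exists_diagonal_equiv`). Let `W t` be the unitary rotating each
plane spanned by `b (2 * n)` and `b (2 * n + 1)` by the angle `t * θ n`. The `W t` form a
one-parameter group, and `W t - 1 ∈ J` because `|sin (t θ)|` and `|cos (t θ) - 1|` are bounded by
`|t| θ` (`exists_rotations`).

The operators of a nonzero ideal that are diagonal in `b` form a Cartan subalgebra of it, as the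
ideal contains all the rank-one projections onto basis vectors (`isCartan_diagSet`). The family is
`C α = W α (diagonal operators of J) (W α)*`. Its members are conjugate under `W (β - α)`, and
`C α ∩ I` is the conjugate by `W α` of the diagonal operators of `I`.

Suppose that `U`, with `U - 1 ∈ I`, conjugates `C α ∩ I` to `C β ∩ I`. Then `V = (W β)* U (W α)` maps
the diagonal operators of `I` to themselves under conjugation, so each column of its matrix has at
most one nonzero entry (`column_of_normalizer`), while `V - W (α - β) ∈ I`. The columns of even index
of `W (α - β)` have the two entries `cos ((α - β) θ n) ≥ 1 / 2` and `sin ((α - β) θ n)`. Wherever `V`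
has no even entry, the cosine is an entry of the difference, so the projection onto those columns
lies in `I`; wherever `V` has an even entry, it has no odd one. Either way
`diag(sin ((α - β) θ)) ∈ I`, hence `D ∈ I` if `α ≠ β`, a contradiction
(`diagonal_mem_of_rotation_sub_mem`).
-/

open Set

open scoped InnerProductSpace

set_option linter.unusedSectionVars false

/-! ### Hilbert bases and diagonal operators -/

section HilbertTools

variable {H : Type*} [NormedAddCommGroup H] [InnerProductSpace ℂ H] [CompleteSpace H]

lemma clm_ext_hilbertBasis_s13 {ι : Type*} (b : HilbertBasis ι ℂ H) {A B : H →L[ℂ] H}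
    (h : ∀ i, A (b i) = B (b i)) : A = B := by
  refine ContinuousLinearMap.ext_on (s := Set.range b) ?_ ?_
  · exact Submodule.dense_iff_topologicalClosure_eq_top.mpr b.dense_span
  · rintro _ ⟨i, rfl⟩
    exact h i

lemma eq_of_inner_hilbertBasis {ι : Type*} (b : HilbertBasis ι ℂ H) {x y : H}
    (h : ∀ i, ⟪b i, x⟫_ℂ = ⟪b i, y⟫_ℂ) : x = y := by
  apply b.repr.injective
  ext i
  rw [b.repr_apply_apply, b.repr_apply_apply, h i]

/-- Two orthonormal families with the same index set are intertwined by a partial isometry. -/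
lemma exists_partial_isometry {ι : Type*} {u v : ι → H} (hu : Orthonormal ℂ u)
    (hv : Orthonormal ℂ v) :
    ∃ U : H →L[ℂ] H, (∀ i, U (u i) = v i) ∧ ∀ x, (∀ i, ⟪u i, x⟫_ℂ = 0) → U x = 0 := by
  classical
  let A : lp (fun _ : ι => ℂ) 2 →L[ℂ] H :=
    (hu.orthogonalFamily.linearIsometry).toContinuousLinearMap
  let B : lp (fun _ : ι => ℂ) 2 →L[ℂ] H :=
    (hv.orthogonalFamily.linearIsometry).toContinuousLinearMap
  have hA : ∀ i, A (lp.single 2 i (1 : ℂ)) = u i := fun i => by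
    simp [A, OrthogonalFamily.linearIsometry_apply_single]
  have hB : ∀ i, B (lp.single 2 i (1 : ℂ)) = v i := fun i => by
    simp [B, OrthogonalFamily.linearIsometry_apply_single]
  have hcoord : ∀ (x : H) (i : ι), (ContinuousLinearMap.adjoint A x) i = ⟪u i, x⟫_ℂ := by
    intro x i
    rw [← hA i, ← ContinuousLinearMap.adjoint_inner_right, lp.inner_single_left]
    simp
  refine ⟨B ∘L ContinuousLinearMap.adjoint A, fun i => ?_, fun x hx => ?_⟩
  · have : ContinuousLinearMap.adjoint A (u i) = lp.single 2 i (1 : ℂ) := by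
      ext j
      rw [hcoord, orthonormal_iff_ite.mp hu, lp.single_apply]
      by_cases h : j = i
      · subst h; simp
      · simp [h]
    rw [ContinuousLinearMap.comp_apply, this, hB]
  · have : ContinuousLinearMap.adjoint A x = 0 := by
      ext j
      rw [hcoord, hx]; simp
    rw [ContinuousLinearMap.comp_apply, this, map_zero]

lemma exists_diagonal (b : HilbertBasis ℕ ℂ H) (a : ℕ → ℂ) (c : ℝ) (ha : ∀ n, ‖a n‖ ≤ c) :
    ∃ D : H →L[ℂ] H, ∀ n, D (b n) = a n • b n := by
  have hc : 0 ≤ c := (norm_nonneg _).trans (ha 0)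
  have hbd : ∀ (x : lp (fun _ : ℕ => ℂ) 2) (n : ℕ),
      ‖a n * x n‖ ≤ ‖((c : ℂ) • x) n‖ := by
    intro x n
    rw [lp.coeFn_smul, Pi.smul_apply, norm_smul, norm_mul]
    gcongr
    simpa [abs_of_nonneg hc] using ha n
  let M : lp (fun _ : ℕ => ℂ) 2 →ₗ[ℂ] lp (fun _ : ℕ => ℂ) 2 :=
    { toFun := fun x => ⟨fun n => a n * x n, Memℓp.mono' (lp.memℓp ((c : ℂ) • x)) (hbd x)⟩
      map_add' := fun x y => by ext n; exact mul_add _ _ _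
      map_smul' := fun k x => by ext n; exact mul_left_comm _ _ _ }
  have hM : ∀ x n, M x n = a n * x n := fun x n => rfl
  let M' : lp (fun _ : ℕ => ℂ) 2 →L[ℂ] lp (fun _ : ℕ => ℂ) 2 :=
    M.mkContinuous c (fun x => by
      have := lp.norm_mono (p := 2) (by norm_num) (x := M x) (y := (c : ℂ) • x)
        (fun n => by rw [hM]; exact hbd x n)
      rw [norm_smul] at this
      simpa [abs_of_nonneg hc] using this)
  refine ⟨(b.repr.symm : _ →L[ℂ] H) ∘L M' ∘L (b.repr : H →L[ℂ] _), fun n => ?_⟩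
  apply b.repr.injective
  ext m
  have : M' (b.repr (b n)) m = a m * b.repr (b n) m := rfl
  simp only [ContinuousLinearMap.comp_apply, map_smul]
  simp only [LinearIsometryEquiv.coe_coe'', LinearIsometryEquiv.apply_symm_apply, this,
    lp.coeFn_smul, Pi.smul_apply, smul_eq_mul]
  by_cases h : m = n
  · rw [h]
  · rw [b.repr_apply_apply, b.orthonormal.2 h, mul_zero, mul_zero]

open Classical in
/-- The diagonal operator `b n ↦ a n • b n`; it is `0` by convention when no bounded operator
acts this way. -/
noncomputable def diagOp (b : HilbertBasis ℕ ℂ H) (a : ℕ → ℂ) : H →L[ℂ] H :=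
  if h : ∃ D : H →L[ℂ] H, ∀ n, D (b n) = a n • b n then h.choose else 0

lemma diagOp_apply (b : HilbertBasis ℕ ℂ H) {a : ℕ → ℂ} {c : ℝ} (ha : ∀ n, ‖a n‖ ≤ c) (n : ℕ) :
    diagOp b a (b n) = a n • b n := by
  have h := exists_diagonal b a c ha
  rw [diagOp, dif_pos h]
  exact h.choose_spec n

lemma inner_hilbertBasis {ι : Type*} [DecidableEq ι] (b : HilbertBasis ι ℂ H) (i j : ι) :
    ⟪b i, b j⟫_ℂ = if i = j then 1 else 0 :=
  orthonormal_iff_ite.mp b.orthonormal i j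

lemma star_apply_of_diagonal (b : HilbertBasis ℕ ℂ H) {A : H →L[ℂ] H} {a : ℕ → ℂ}
    (hA : ∀ n, A (b n) = a n • b n) (n : ℕ) : (star A) (b n) = star (a n) • b n := by
  apply eq_of_inner_hilbertBasis b
  intro i
  rw [ContinuousLinearMap.star_eq_adjoint, ContinuousLinearMap.adjoint_inner_right, hA,
    inner_smul_left, inner_smul_right, inner_hilbertBasis]
  by_cases h : i = n
  · subst h; simp
  · simp [h]

lemma norm_coeff_le (b : HilbertBasis ℕ ℂ H) {A : H →L[ℂ] H} {a : ℕ → ℂ}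
    (hA : ∀ n, A (b n) = a n • b n) (n : ℕ) : ‖a n‖ ≤ ‖A‖ := by
  have h := A.le_opNorm (b n)
  rw [hA, norm_smul, b.orthonormal.1 n] at h
  simpa using h

end HilbertTools

/-! ### Operator ideals and compactness -/

section Ideals

variable {H : Type*} [NormedAddCommGroup H] [InnerProductSpace ℂ H] [CompleteSpace H]

namespace IsOperatorIdeal

variable {I : Set (H →L[ℂ] H)}

lemma zero_mem (hI : IsOperatorIdeal I) : (0 : H →L[ℂ] H) ∈ I := hI.1

lemma add_mem (hI : IsOperatorIdeal I) {A B : H →L[ℂ] H} (hA : A ∈ I) (hB : B ∈ I) :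
    A + B ∈ I := hI.2.1 A B hA hB

lemma smul_mem (hI : IsOperatorIdeal I) (c : ℂ) {A : H →L[ℂ] H} (hA : A ∈ I) :
    c • A ∈ I := hI.2.2.1 c A hA

lemma mul_left (hI : IsOperatorIdeal I) (T : H →L[ℂ] H) {A : H →L[ℂ] H} (hA : A ∈ I) :
    T * A ∈ I := (hI.2.2.2 T A hA).1

lemma mul_right (hI : IsOperatorIdeal I) (T : H →L[ℂ] H) {A : H →L[ℂ] H} (hA : A ∈ I) :
    A * T ∈ I := (hI.2.2.2 T A hA).2

lemma sub_mem (hI : IsOperatorIdeal I) {A B : H →L[ℂ] H} (hA : A ∈ I) (hB : B ∈ I) :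
    A - B ∈ I := by
  have := hI.add_mem hA (hI.smul_mem (-1) hB)
  simpa [sub_eq_add_neg] using this

/-- A diagonal operator whose entries are bounded multiples of those of a diagonal element of `I`
lies in `I`. -/
lemma diagOp_mem_of_factor (hI : IsOperatorIdeal I) (b : HilbertBasis ℕ ℂ H) {a q r : ℕ → ℂ}
    {c : ℝ} (hq : ∀ n, ‖q n‖ ≤ c) {A B : H →L[ℂ] H} (hA : ∀ n, A (b n) = a n • b n)
    (hB : ∀ n, B (b n) = r n • b n) (hr : ∀ n, r n = q n * a n) (hAI : A ∈ I) : B ∈ I := by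
  have : B = diagOp b q * A := clm_ext_hilbertBasis_s13 b fun n => by
    rw [mul_apply_eq_comp, hA, map_smul, diagOp_apply b hq, hB, hr, smul_smul,
      mul_comm]
  rw [this]
  exact hI.mul_left _ hAI

end IsOperatorIdeal

/-- If every finite-codimensional subspace of the form `sᗮ` contains a unit vector `e` with
`ε ≤ ‖T e‖`, then an ideal containing `T` contains the identity: choosing such vectors inductively
gives an orthonormal sequence whose images under `T` are orthogonal, and compressing `T` to it gives
an invertible diagonal operator. -/
lemma one_mem_of_forall_finset_exists {J : Set (H →L[ℂ] H)} (hJ : IsOperatorIdeal J)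
    (b : HilbertBasis ℕ ℂ H) {T : H →L[ℂ] H} (hT : T ∈ J) {ε : ℝ} (hε : 0 < ε)
    (h : ∀ s : Finset H, ∃ e : H, ‖e‖ = 1 ∧ ε ≤ ‖T e‖ ∧ ∀ x ∈ s, ⟪x, e⟫_ℂ = 0) :
    (1 : H →L[ℂ] H) ∈ J := by
  classical
  obtain ⟨e, he, hee⟩ := exists_seq_of_forall_finset_exists
    (fun e : H => ‖e‖ = 1 ∧ ε ≤ ‖T e‖)
    (fun x e => ⟪x, e⟫_ℂ = 0 ∧ ⟪T x, T e⟫_ℂ = 0) (by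
      intro s _
      obtain ⟨e, h1, h2, h3⟩ := h (s ∪ s.image (fun x => ContinuousLinearMap.adjoint T (T x)))
      refine ⟨e, ⟨h1, h2⟩, fun x hx => ⟨h3 x (by simp [hx]), ?_⟩⟩
      rw [← ContinuousLinearMap.adjoint_inner_left]
      exact h3 _ (Finset.mem_union_right _ (Finset.mem_image_of_mem _ hx)))
  have hpos : ∀ n, 0 < ‖T (e n)‖ := fun n => hε.trans_le (he n).2
  have hu : Orthonormal ℂ e := by
    refine ⟨fun n => (he n).1, fun m n hmn => ?_⟩
    rcases lt_or_gt_of_ne hmn with hlt | hlt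
    · exact (hee m n hlt).1
    · exact inner_eq_zero_symm.mp (hee n m hlt).1
  have hv : Orthonormal ℂ (fun n => ((‖T (e n)‖⁻¹ : ℝ) : ℂ) • T (e n)) := by
    refine ⟨fun n => ?_, fun m n hmn => ?_⟩
    · rw [norm_smul, Complex.norm_real, norm_inv, norm_norm, inv_mul_cancel₀ (hpos n).ne']
    · have : ⟪T (e m), T (e n)⟫_ℂ = 0 := by
        rcases lt_or_gt_of_ne hmn with hlt | hlt
        · exact (hee m n hlt).2
        · exact inner_eq_zero_symm.mp (hee n m hlt).2
      simp [inner_smul_left, inner_smul_right, this]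
  obtain ⟨U, hU, -⟩ := exists_partial_isometry b.orthonormal hu
  obtain ⟨V, hV, -⟩ := exists_partial_isometry hv b.orthonormal
  have hVT : ∀ n, V (T (e n)) = (‖T (e n)‖ : ℂ) • b n := by
    intro n
    rw [← hV n, map_smul, smul_smul]
    simp [(hpos n).ne']
  refine hJ.diagOp_mem_of_factor b (A := V * T * U) (a := fun n => (‖T (e n)‖ : ℂ))
    (q := fun n => ((‖T (e n)‖⁻¹ : ℝ) : ℂ)) (r := fun _ => 1) (c := ε⁻¹) ?_ ?_ ?_ ?_ ?_
  · intro n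
    rw [Complex.norm_real, norm_inv, norm_norm]
    exact inv_anti₀ hε (he n).2
  · intro n
    simp [hU, hVT]
  · intro n; simp
  · intro n
    simp [(hpos n).ne']
  · exact hJ.mul_right _ (hJ.mul_left _ hT)

/-- Calkin: a proper ideal consists of compact operators. -/
lemma isCompactOperator_of_mem_proper {J : Set (H →L[ℂ] H)} (hJ : IsOperatorIdeal J)
    (b : HilbertBasis ℕ ℂ H) (hJp : ∃ T : H →L[ℂ] H, T ∉ J) {T : H →L[ℂ] H} (hT : T ∈ J) :
    IsCompactOperator T := by
  have hone : (1 : H →L[ℂ] H) ∉ J := fun h1 => by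
    obtain ⟨S, hS⟩ := hJp
    exact hS (by simpa using hJ.mul_left S h1)
  have key : ∀ ε > 0, ∃ S : H →L[ℂ] H, IsCompactOperator S ∧ ‖T - S‖ ≤ ε := by
    intro ε hε
    by_contra! hcon
    refine hone (one_mem_of_forall_finset_exists hJ b hT hε fun s => ?_)
    by_contra! hs
    let K : Submodule ℂ H := Submodule.span ℂ (s : Set H)
    have : FiniteDimensional ℂ K := FiniteDimensional.span_finset ℂ s
    have : ProperSpace K := FiniteDimensional.proper ℂ K
    have hcomp : IsCompactOperator (T ∘L K.starProjection) := by
      have h1 : IsCompactOperator K.orthogonalProjectionOnto :=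
        isCompactOperator_of_locallyCompactSpace_dom K.orthogonalProjectionOnto
      exact h1.clm_comp (T ∘L K.subtypeL)
    refine absurd (hcon _ hcomp) (not_lt.mpr ?_)
    refine ContinuousLinearMap.opNorm_le_bound _ hε.le fun x => ?_
    set y : H := x - K.starProjection x with hy
    have hyK : y ∈ Kᗮ := K.sub_starProjection_mem_orthogonal x
    have hyx : ‖y‖ ≤ ‖x‖ := by
      have := Kᗮ.norm_starProjection_apply_le x
      rwa [Submodule.starProjection_orthogonal_val] at this
    have hTy : (T - T ∘L K.starProjection) x = T y := by simp [hy]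
    rw [hTy]
    rcases eq_or_ne y 0 with h0 | h0
    · rw [h0, map_zero, norm_zero]; positivity
    have hny : 0 < ‖y‖ := norm_pos_iff.mpr h0
    by_contra! hlt
    obtain ⟨z, hz, hz'⟩ := hs (((‖y‖⁻¹ : ℝ) : ℂ) • y)
      (by rw [norm_smul, Complex.norm_real, norm_inv, norm_norm, inv_mul_cancel₀ hny.ne'])
      (by
        rw [map_smul, norm_smul, Complex.norm_real, norm_inv, norm_norm, ← div_eq_inv_mul,
          le_div_iff₀ hny]
        exact (mul_le_mul_of_nonneg_left hyx hε.le).trans hlt.le)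
    refine hz' ?_
    rw [inner_smul_right, hyK z (Submodule.subset_span hz), mul_zero]
  have : T ∈ closure {S : H →L[ℂ] H | IsCompactOperator S} := by
    rw [Metric.mem_closure_iff]
    intro ε hε
    obtain ⟨S, hS, hle⟩ := key (ε / 2) (half_pos hε)
    exact ⟨S, hS, by rw [dist_eq_norm]; linarith⟩
  exact isClosed_setOfPred_isCompactOperator.closure_subset this

end Ideals

/-! ### Singular values -/

universe u

section SingularValues

variable {H : Type*} [NormedAddCommGroup H] [InnerProductSpace ℂ H] [CompleteSpace H]

/-- Diagonalization of a compact self-adjoint operator in a Hilbert basis. -/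
lemma exists_eigenbasis {H : Type u} [NormedAddCommGroup H] [InnerProductSpace ℂ H]
    [CompleteSpace H] {A : H →L[ℂ] H} (hA : IsCompactOperator A)
    (hs : (A : H →ₗ[ℂ] H).IsSymmetric) :
    ∃ (ι : Type u) (e : HilbertBasis ι ℂ H), ∀ i, ∃ μ : ℂ, A (e i) = μ • e i := by
  let G : ℂ → Submodule ℂ H := fun μ => Module.End.eigenspace (A : H →ₗ[ℂ] H) μ
  have hcl : ∀ μ, IsClosed (G μ : Set H) := by
    intro μ
    have : (G μ : Set H) = {x | A x = μ • x} := by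
      ext x; simp [G]
    rw [this]
    exact isClosed_eq A.continuous (continuous_const_smul μ)
  have hcomp : ∀ μ, CompleteSpace (G μ) := fun μ => (hcl μ).completeSpace_coe
  have hfam : OrthogonalFamily ℂ (fun μ => G μ) (fun μ => (G μ).subtypeₗᵢ) :=
    hs.orthogonalFamily_eigenspaces
  choose s e he using fun μ => exists_hilbertBasis ℂ (G μ)
  have hon : Orthonormal ℂ (fun p : Σ μ, s μ => ((e p.1 p.2 : G p.1) : H)) :=
    hfam.orthonormal_sigma_orthonormal (fun μ => (e μ).orthonormal)
  have hspan : (Submodule.span ℂ (Set.range (fun p : Σ μ, s μ => ((e p.1 p.2 : G p.1) : H))))ᗮ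
      = ⊥ := by
    rw [eq_bot_iff, ← A.orthogonalComplement_iSup_eigenspaces_eq_bot hA hs]
    intro x hx
    rw [← Submodule.iInf_orthogonal, Submodule.mem_iInf]
    intro μ y hy
    have hproj : (G μ).orthogonalProjectionOnto x = 0 := by
      refine eq_of_inner_hilbertBasis (e μ) fun i => ?_
      rw [inner_zero_right, Submodule.inner_orthogonalProjectionOnto_eq_of_mem_left]
      exact hx _ (Submodule.subset_span ⟨⟨μ, i⟩, rfl⟩)
    rw [Submodule.orthogonalProjectionOnto_eq_zero_iff] at hproj
    exact hproj y hy
  let B := HilbertBasis.mkOfOrthogonalEqBot hon hspan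
  have hB : ∀ p, B p = ((e p.1 p.2 : G p.1) : H) := fun p => by
    simp [B, HilbertBasis.coe_mkOfOrthogonalEqBot]
  refine ⟨Σ μ, s μ, B, fun p => ⟨p.1, ?_⟩⟩
  rw [hB]
  exact Module.End.mem_eigenspace_iff.mp (e p.1 p.2).2

lemma countable_of_orthonormal (b : HilbertBasis ℕ ℂ H) {ι : Type*} {e : ι → H}
    (he : Orthonormal ℂ e) : Countable ι := by
  have hc : (⋃ n : ℕ, Function.support fun i => ‖⟪e i, b n⟫_ℂ‖ ^ 2).Countable :=
    Set.countable_iUnion fun n => (he.inner_products_summable (x := b n)).countable_support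
  refine Set.countable_univ_iff.mp (hc.mono fun i _ => ?_)
  by_contra hi
  simp only [Set.mem_iUnion, Function.mem_support, not_exists, not_not] at hi
  have h0 : e i = 0 := eq_of_inner_hilbertBasis b fun n => by
    have := hi n
    rw [sq_eq_zero_iff, norm_eq_zero] at this
    rw [inner_zero_right]
    exact inner_eq_zero_symm.mp this
  exact he.ne_zero i h0

/-- Singular values: a compact operator `T` generates the same ideal as a diagonal operator with
nonnegative entries bounded by `‖T‖`. -/
lemma exists_diagonal_equiv (b : HilbertBasis ℕ ℂ H) {T : H →L[ℂ] H} (hT : IsCompactOperator T) :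
    ∃ (θ : ℕ → ℝ) (D X Y X' Y' : H →L[ℂ] H), (∀ n, 0 ≤ θ n) ∧ (∀ n, θ n ≤ ‖T‖) ∧
      (∀ n, D (b n) = (θ n : ℂ) • b n) ∧ D = X * T * Y ∧ T = X' * D * Y' := by
  classical
  obtain ⟨ι, e, he⟩ := exists_eigenbasis (A := ContinuousLinearMap.adjoint T * T)
    (hT.clm_comp (ContinuousLinearMap.adjoint T))
    (by
      intro x y
      simp [ContinuousLinearMap.adjoint_inner_left, ContinuousLinearMap.adjoint_inner_right])
  choose μ hμ using he
  have horth : ∀ i j, i ≠ j → ⟪T (e i), T (e j)⟫_ℂ = 0 := by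
    intro i j hij
    have h2 := hμ j
    rw [mul_apply_eq_comp] at h2
    rw [← ContinuousLinearMap.adjoint_inner_right, h2, inner_smul_right, e.orthonormal.2 hij,
      mul_zero]
  -- only the indices with nonzero singular value matter
  let S := {i : ι // T (e i) ≠ 0}
  let u : S → H := fun i => e i.1
  have hu : Orthonormal ℂ u := e.orthonormal.comp _ Subtype.val_injective
  have hpos : ∀ i : S, 0 < ‖T (u i)‖ := fun i => norm_pos_iff.mpr i.2
  let v : S → H := fun i => ((‖T (u i)‖⁻¹ : ℝ) : ℂ) • T (u i)
  have hv : Orthonormal ℂ v := by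
    refine ⟨fun n => ?_, fun m n hmn => ?_⟩
    · rw [norm_smul, Complex.norm_real, norm_inv, norm_norm, inv_mul_cancel₀ (hpos n).ne']
    · have : ⟪T (u m), T (u n)⟫_ℂ = 0 := horth _ _ (fun h => hmn (Subtype.ext h))
      simp [v, inner_smul_left, inner_smul_right, this]
  have hTv : ∀ i, T (u i) = (‖T (u i)‖ : ℂ) • v i := fun i => by
    simp [v, smul_smul, (hpos i).ne']
  have : Countable S := countable_of_orthonormal b hu
  obtain ⟨f, hf⟩ := exists_injective_nat S
  have hbf : Orthonormal ℂ (fun i => b (f i)) := b.orthonormal.comp _ hf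
  obtain ⟨X, hX, -⟩ := exists_partial_isometry hv hbf
  obtain ⟨Y, hY, hY0⟩ := exists_partial_isometry hbf hu
  obtain ⟨X', hX', -⟩ := exists_partial_isometry hbf hv
  obtain ⟨Y', hY', hY0'⟩ := exists_partial_isometry hu hbf
  let θ : ℕ → ℝ := fun n => if h : ∃ i, f i = n then ‖T (u h.choose)‖ else 0
  have hθf : ∀ i, θ (f i) = ‖T (u i)‖ := fun i => by
    have h : ∃ j, f j = f i := ⟨i, rfl⟩
    have h2 : h.choose = i := hf h.choose_spec
    simp only [θ, dif_pos h, h2]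
  have hθ0 : ∀ n, (¬ ∃ i, f i = n) → θ n = 0 := fun n h => by simp only [θ, dif_neg h]
  have hD : ∀ n, (X * T * Y) (b n) = (θ n : ℂ) • b n := by
    intro n
    simp only [mul_apply_eq_comp]
    by_cases h : ∃ i, f i = n
    · obtain ⟨i, rfl⟩ := h
      rw [hY, hTv, map_smul, hX, hθf]
    · rw [hY0 (b n) (fun i => b.orthonormal.2 (fun hh => h ⟨i, hh⟩)), hθ0 n h]
      simp
  refine ⟨θ, X * T * Y, X, Y, X', Y', fun n => ?_, fun n => ?_, hD, rfl, ?_⟩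
  · by_cases h : ∃ i, f i = n
    · obtain ⟨i, rfl⟩ := h
      rw [hθf]; exact norm_nonneg _
    · rw [hθ0 n h]
  · by_cases h : ∃ i, f i = n
    · obtain ⟨i, rfl⟩ := h
      rw [hθf]
      simpa [u, e.orthonormal.1] using T.le_opNorm (u i)
    · rw [hθ0 n h]; exact norm_nonneg _
  · refine clm_ext_hilbertBasis_s13 e fun i => ?_
    rw [mul_apply_eq_comp, mul_apply_eq_comp]
    by_cases h : T (e i) = 0
    · rw [h, hY0' (e i) (fun j => e.orthonormal.2 (fun hh => j.2 (hh ▸ h)))]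
      simp
    · change T (u ⟨i, h⟩) = X' _
      change _ = X' ((X * T * Y) (Y' (u ⟨i, h⟩)))
      rw [hY', hD, map_smul, hX', hθf]
      exact hTv _

end SingularValues

/-! ### Cartan subalgebras of diagonal operators -/

section Cartan

variable {H : Type*} [NormedAddCommGroup H] [InnerProductSpace ℂ H] [CompleteSpace H]

/-- The elements of `I` that are diagonal with respect to the basis `b`. -/
def diagSet (b : HilbertBasis ℕ ℂ H) (I : Set (H →L[ℂ] H)) : Set (H →L[ℂ] H) :=
  {A | A ∈ I ∧ ∀ n, ∃ c : ℂ, A (b n) = c • b n}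

open InnerProductSpace in
lemma rankOne_basis_mem {I : Set (H →L[ℂ] H)} (hI : IsOperatorIdeal I)
    (hInz : ∃ T ∈ I, T ≠ (0 : H →L[ℂ] H)) (b : HilbertBasis ℕ ℂ H) (n : ℕ) :
    rankOne ℂ (b n) (b n) ∈ diagSet b I := by
  refine ⟨?_, fun m => ?_⟩
  · obtain ⟨T, hT, hT0⟩ := hInz
    obtain ⟨x, hx⟩ : ∃ x, T x ≠ 0 := by
      by_contra! h
      exact hT0 (ContinuousLinearMap.ext h)
    have hin : ⟪T x, T x⟫_ℂ ≠ 0 := inner_self_ne_zero.mpr hx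
    have heq : rankOne ℂ (b n) (b n) =
        (⟪T x, T x⟫_ℂ)⁻¹ • (rankOne ℂ (b n) (T x) * T * rankOne ℂ x (b n)) := by
      ext z
      simp only [smul_apply, mul_apply_eq_comp, rankOne_apply, map_smul, smul_smul]
      rw [mul_comm (⟪b n, z⟫_ℂ), ← mul_assoc, inv_mul_cancel₀ hin, one_mul]
    rw [heq]
    exact hI.smul_mem _ (hI.mul_right _ (hI.mul_left _ hT))
  · rw [rankOne_apply, inner_hilbertBasis]
    by_cases h : n = m
    · subst h; exact ⟨1, by simp⟩
    · exact ⟨0, by simp [h]⟩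

lemma isCartan_diagSet {I : Set (H →L[ℂ] H)} (hI : IsOperatorIdeal I)
    (hInz : ∃ T ∈ I, T ≠ (0 : H →L[ℂ] H)) (b : HilbertBasis ℕ ℂ H) :
    IsCartanSubalgebra I (diagSet b I) := by
  refine ⟨⟨fun A hA => hA.1, ⟨hI.zero_mem, fun n => ⟨0, by simp⟩⟩, ?_, ?_, ?_, ?_⟩, ?_⟩
  · rintro S T ⟨hS, hS'⟩ ⟨hT, hT'⟩
    refine ⟨hI.add_mem hS hT, fun n => ?_⟩
    obtain ⟨c, hc⟩ := hS' n
    obtain ⟨d, hd⟩ := hT' n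
    exact ⟨c + d, by simp [hc, hd, add_smul]⟩
  · rintro k T ⟨hT, hT'⟩
    refine ⟨hI.smul_mem k hT, fun n => ?_⟩
    obtain ⟨d, hd⟩ := hT' n
    exact ⟨k * d, by simp [hd, smul_smul]⟩
  · rintro T ⟨hT, hT'⟩
    choose d hd using hT'
    have hst := star_apply_of_diagonal b hd
    -- the star is `T` times a diagonal operator with entries of modulus at most `1`
    refine ⟨hI.diagOp_mem_of_factor b (q := fun n => star (d n) / d n) (c := 1) ?_ hd hst ?_ hT,
      fun n => ⟨_, hst n⟩⟩
    · intro n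
      rw [norm_div, norm_star]
      exact div_self_le_one _
    · intro n
      rcases eq_or_ne (d n) 0 with h | h
      · simp [h]
      · field_simp
  · rintro S T ⟨hS, hS'⟩ ⟨hT, hT'⟩
    refine clm_ext_hilbertBasis_s13 b fun n => ?_
    obtain ⟨c, hc⟩ := hS' n
    obtain ⟨d, hd⟩ := hT' n
    rw [mul_apply_eq_comp, mul_apply_eq_comp, hc, hd, map_smul, map_smul, hc, hd, smul_comm]
  · intro C' hC' hsub
    refine Set.Subset.antisymm (fun A hA => ⟨hC'.1 hA, fun n => ?_⟩) hsub
    have hcomm := hC'.2.2.2.2.2 A _ hA (hsub (rankOne_basis_mem hI hInz b n))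
    have := congrArg (fun S : H →L[ℂ] H => S (b n)) hcomm
    simp only [mul_apply_eq_comp, InnerProductSpace.rankOne_apply, inner_hilbertBasis, if_true,
      one_smul] at this
    exact ⟨_, this⟩

/-- Conjugation by a unitary preserves every two-sided ideal, hence Cartan subalgebras. -/
lemma isCartan_conj {I C : Set (H →L[ℂ] H)} (hI : IsOperatorIdeal I) {W : H →L[ℂ] H}
    (hW : W ∈ unitary (H →L[ℂ] H)) (hC : IsCartanSubalgebra I C) :
    IsCartanSubalgebra I ((fun T : H →L[ℂ] H => W * T * star W) '' C) := by
  have h1 : star W * W = 1 := Unitary.star_mul_self_of_mem hW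
  have h2 : W * star W = 1 := Unitary.mul_star_self_of_mem hW
  have key : ∀ {V : H →L[ℂ] H} {D : Set (H →L[ℂ] H)}, star V * V = 1 →
      IsCommSelfAdjointSubspace I D →
      IsCommSelfAdjointSubspace I ((fun T : H →L[ℂ] H => V * T * star V) '' D) := by
    rintro V D hV ⟨a1, a2, a3, a4, a5, a6⟩
    have hmul : ∀ S T : H →L[ℂ] H, (V * S * star V) * (V * T * star V) = V * (S * T) * star V := by
      intro S T
      calc _ = V * S * (star V * V) * T * star V := by simp only [mul_assoc]
        _ = _ := by rw [hV]; simp only [mul_assoc, mul_one]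
    refine ⟨?_, ⟨0, a2, by simp⟩, ?_, ?_, ?_, ?_⟩
    · rintro _ ⟨T, hT, rfl⟩
      exact hI.mul_right _ (hI.mul_left _ (a1 hT))
    · rintro _ _ ⟨S, hS, rfl⟩ ⟨T, hT, rfl⟩
      exact ⟨S + T, a3 S T hS hT, by simp [mul_add, add_mul]⟩
    · rintro k _ ⟨T, hT, rfl⟩
      exact ⟨k • T, a4 k T hT, by simp⟩
    · rintro _ ⟨T, hT, rfl⟩
      exact ⟨star T, a5 T hT, by simp [mul_assoc]⟩
    · rintro _ _ ⟨S, hS, rfl⟩ ⟨T, hT, rfl⟩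
      simp only [hmul, a6 S T hS hT]
  refine ⟨key h1 hC.1, fun C' hC' hsub => ?_⟩
  have hback : (fun T : H →L[ℂ] H => star W * T * star (star W)) '' C' = C := by
    refine hC.2 _ (key (by rwa [star_star]) hC') fun T hT => ⟨_, hsub ⟨T, hT, rfl⟩, ?_⟩
    calc _ = (star W * W) * T * (star W * W) := by simp only [mul_assoc, star_star]
      _ = T := by rw [h1]; simp
  rw [← hback, Set.image_image]
  refine Set.Subset.antisymm (fun T hT => ⟨T, hT, ?_⟩) ?_
  · calc _ = (W * star W) * T * (W * star W) := by simp only [mul_assoc, star_star]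
      _ = T := by rw [h2]; simp
  · rintro _ ⟨T, hT, rfl⟩
    have : W * (star W * T * star (star W)) * star W = T := by
      calc _ = (W * star W) * T * (W * star W) := by simp only [mul_assoc, star_star]
        _ = T := by rw [h2]; simp
    simpa only [this] using hT

lemma conj_diagSet_inter {I J : Set (H →L[ℂ] H)} (hI : IsOperatorIdeal I) (hIJ : I ⊆ J)
    (b : HilbertBasis ℕ ℂ H) {W : H →L[ℂ] H} (hW : W ∈ unitary (H →L[ℂ] H)) :
    (fun T : H →L[ℂ] H => W * T * star W) '' (diagSet b J) ∩ I =
      (fun T : H →L[ℂ] H => W * T * star W) '' (diagSet b I) := by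
  have h1 : star W * W = 1 := Unitary.star_mul_self_of_mem hW
  ext A
  constructor
  · rintro ⟨⟨T, hT, rfl⟩, hA⟩
    refine ⟨T, ⟨?_, hT.2⟩, rfl⟩
    have h := hI.mul_right W (hI.mul_left (star W) hA)
    have heq : star W * (W * T * star W) * W = T := by
      calc _ = (star W * W) * T * (star W * W) := by simp only [mul_assoc]
        _ = T := by rw [h1]; simp
    simpa only [heq] using h
  · rintro ⟨T, hT, rfl⟩
    exact ⟨⟨T, ⟨hIJ hT.1, hT.2⟩, rfl⟩, hI.mul_right _ (hI.mul_left _ hT.1)⟩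

end Cartan

/-! ### Plane rotations -/

section Rotations

variable {H : Type*} [NormedAddCommGroup H] [InnerProductSpace ℂ H] [CompleteSpace H]

lemma hilbertBasis_ext_even_odd (b : HilbertBasis ℕ ℂ H) {A B : H →L[ℂ] H}
    (h0 : ∀ n, A (b (2 * n)) = B (b (2 * n)))
    (h1 : ∀ n, A (b (2 * n + 1)) = B (b (2 * n + 1))) : A = B := by
  refine clm_ext_hilbertBasis_s13 b fun n => ?_
  rcases Nat.even_or_odd' n with ⟨k, rfl | rfl⟩
  · exact h0 k
  · exact h1 k

/-- If `E` maps `b n` to `b (f n)` with `f` injective, then `star E` inverts `E` on these vectors and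
kills the other basis vectors. -/
lemma star_apply_of_shift (b : HilbertBasis ℕ ℂ H) {E : H →L[ℂ] H} {f : ℕ → ℕ}
    (hf : Function.Injective f) (hE : ∀ n, E (b n) = b (f n)) :
    (∀ n, (star E) (b (f n)) = b n) ∧ ∀ m, (∀ n, f n ≠ m) → (star E) (b m) = 0 := by
  refine ⟨fun n => eq_of_inner_hilbertBasis b fun i => ?_,
    fun m hm => eq_of_inner_hilbertBasis b fun i => ?_⟩
  · rw [ContinuousLinearMap.star_eq_adjoint, ContinuousLinearMap.adjoint_inner_right, hE,
      inner_hilbertBasis, inner_hilbertBasis]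
    simp [hf.eq_iff]
  · rw [ContinuousLinearMap.star_eq_adjoint, ContinuousLinearMap.adjoint_inner_right, hE,
      inner_hilbertBasis, inner_zero_right, if_neg (hm i)]

/-- The isometries `E`, `F` onto the even and odd basis vectors, and the family of operators `W t`
rotating each plane spanned by `b (2 * n)` and `b (2 * n + 1)` by the angle `t * θ n`. -/
lemma exists_rotations (b : HilbertBasis ℕ ℂ H) (θ : ℕ → ℝ) :
    ∃ (E F : H →L[ℂ] H) (W : ℝ → H →L[ℂ] H),
      (∀ n, E (b n) = b (2 * n)) ∧ (∀ n, F (b n) = b (2 * n + 1)) ∧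
      (∀ t n, W t (b (2 * n)) =
        (Real.cos (t * θ n) : ℂ) • b (2 * n) + (Real.sin (t * θ n) : ℂ) • b (2 * n + 1)) ∧
      (∀ t n, W t (b (2 * n + 1)) =
        -(Real.sin (t * θ n) : ℂ) • b (2 * n) + (Real.cos (t * θ n) : ℂ) • b (2 * n + 1)) ∧
      (∀ t, star (W t) = W (-t)) ∧
      ∀ I : Set (H →L[ℂ] H), IsOperatorIdeal I → ∀ D ∈ I,
        (∀ n, D (b n) = (θ n : ℂ) • b n) → ∀ t, W t - 1 ∈ I := by
  have hinj0 : Function.Injective (fun n : ℕ => 2 * n) := fun m n h => by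
    simp only at h; omega
  have hinj1 : Function.Injective (fun n : ℕ => 2 * n + 1) := fun m n h => by
    simp only at h; omega
  obtain ⟨E, hE, -⟩ := exists_partial_isometry b.orthonormal (b.orthonormal.comp _ hinj0)
  obtain ⟨F, hF, -⟩ := exists_partial_isometry b.orthonormal (b.orthonormal.comp _ hinj1)
  simp only [Function.comp_apply] at hE hF
  obtain ⟨hE1, hE2⟩ := star_apply_of_shift b hinj0 hE
  obtain ⟨hF1, hF2⟩ := star_apply_of_shift b hinj1 hF
  have hE3 : ∀ n, (star E) (b (2 * n + 1)) = 0 := fun n => hE2 _ fun m => by omega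
  have hF3 : ∀ n, (star F) (b (2 * n)) = 0 := fun n => hF2 _ fun m => by omega
  let C : ℝ → H →L[ℂ] H := fun t => diagOp b (fun n => (Real.cos (t * θ n) : ℂ))
  let S : ℝ → H →L[ℂ] H := fun t => diagOp b (fun n => (Real.sin (t * θ n) : ℂ))
  have hC : ∀ t n, C t (b n) = (Real.cos (t * θ n) : ℂ) • b n := fun t n =>
    diagOp_apply b (c := 1) (fun n => by
      rw [Complex.norm_real]; exact Real.abs_cos_le_one _) n
  have hS : ∀ t n, S t (b n) = (Real.sin (t * θ n) : ℂ) • b n := fun t n =>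
    diagOp_apply b (c := 1) (fun n => by
      rw [Complex.norm_real]; exact Real.abs_sin_le_one _) n
  have hC' : ∀ t, star (C t) = C (-t) := fun t => clm_ext_hilbertBasis_s13 b fun n => by
    rw [star_apply_of_diagonal b (hC t), hC, neg_mul, Real.cos_neg,
      ← starRingEnd_apply, Complex.conj_ofReal]
  have hS' : ∀ t, star (S t) = - S (-t) := fun t => clm_ext_hilbertBasis_s13 b fun n => by
    rw [star_apply_of_diagonal b (hS t), neg_apply, hS, neg_mul, Real.sin_neg,
      ← starRingEnd_apply, Complex.conj_ofReal, Complex.ofReal_neg, neg_smul, neg_neg]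
  let W : ℝ → H →L[ℂ] H := fun t =>
    E * C t * star E + F * C t * star F + F * S t * star E - E * S t * star F
  have hW0 : ∀ t n, W t (b (2 * n)) =
      (Real.cos (t * θ n) : ℂ) • b (2 * n) + (Real.sin (t * θ n) : ℂ) • b (2 * n + 1) := by
    intro t n
    simp only [W, add_apply, sub_apply, mul_apply_eq_comp, hE1, hF3, hC, hS, map_smul, hE, hF,
      map_zero, add_zero, sub_zero]
  have hW1 : ∀ t n, W t (b (2 * n + 1)) =
      -(Real.sin (t * θ n) : ℂ) • b (2 * n) + (Real.cos (t * θ n) : ℂ) • b (2 * n + 1) := by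
    intro t n
    simp only [W, add_apply, sub_apply, mul_apply_eq_comp, hF1, hE3, hC, hS, map_smul, hE, hF,
      map_zero, add_zero, zero_add]
    rw [neg_smul]; abel
  refine ⟨E, F, W, hE, hF, hW0, hW1, fun t => ?_, fun I hI D hD hDb t => ?_⟩
  · simp only [W, star_add, star_sub, star_mul, star_star, hC', hS', mul_assoc, mul_neg, neg_mul]
    abel
  · have hC1 : C t - 1 ∈ I := by
      refine hI.diagOp_mem_of_factor b
        (q := fun n => (((Real.cos (t * θ n) - 1) / θ n : ℝ) : ℂ)) (c := |t|)
        (r := fun n => ((Real.cos (t * θ n) - 1 : ℝ) : ℂ)) ?_ hDb ?_ ?_ hD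
      · intro n
        rw [Complex.norm_real, Real.norm_eq_abs, abs_div]
        refine div_le_of_le_mul₀ (abs_nonneg _) (abs_nonneg _) ?_
        have := Real.abs_cos_sub_cos_le (t * θ n) 0
        rwa [Real.cos_zero, sub_zero, abs_mul] at this
      · intro n
        rw [sub_apply, hC, one_apply_eq_self]
        push_cast
        rw [sub_smul, one_smul]
      · intro n
        rcases eq_or_ne (θ n) 0 with h | h
        · simp [h]
        · rw [← Complex.ofReal_mul, div_mul_cancel₀ _ h]
    have hS1 : S t ∈ I := by
      refine hI.diagOp_mem_of_factor b
        (q := fun n => ((Real.sin (t * θ n) / θ n : ℝ) : ℂ)) (c := |t|)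
        (r := fun n => ((Real.sin (t * θ n) : ℝ) : ℂ)) ?_ hDb (hS t) ?_ hD
      · intro n
        rw [Complex.norm_real, Real.norm_eq_abs, abs_div]
        refine div_le_of_le_mul₀ (abs_nonneg _) (abs_nonneg _) ?_
        rw [← abs_mul]
        exact Real.abs_sin_le_abs
      · intro n
        rcases eq_or_ne (θ n) 0 with h | h
        · simp [h]
        · rw [← Complex.ofReal_mul, div_mul_cancel₀ _ h]
    have hone : E * star E + F * star F = 1 := by
      refine hilbertBasis_ext_even_odd b (fun n => ?_) (fun n => ?_)
      · simp [hE1, hF3, hE]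
      · simp [hF1, hE3, hF]
    have heq : W t - 1 = E * (C t - 1) * star E + F * (C t - 1) * star F + F * S t * star E
        - E * S t * star F := by
      have h : W t - (E * star E + F * star F) = E * (C t - 1) * star E
          + F * (C t - 1) * star F + F * S t * star E - E * S t * star F := by
        simp only [W, mul_sub, sub_mul, mul_one]
        abel
      rwa [hone] at h
    rw [heq]
    exact hI.sub_mem (hI.add_mem (hI.add_mem (hI.mul_right _ (hI.mul_left _ hC1))
      (hI.mul_right _ (hI.mul_left _ hC1))) (hI.mul_right _ (hI.mul_left _ hS1)))
      (hI.mul_right _ (hI.mul_left _ hS1))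

/-- If `A ↦ V A V*` maps diagonal operators of `I` to diagonal operators, then each column of the
matrix of `V` has at most one nonzero entry. -/
lemma column_of_normalizer {I : Set (H →L[ℂ] H)} (hI : IsOperatorIdeal I)
    (hInz : ∃ T ∈ I, T ≠ (0 : H →L[ℂ] H)) (b : HilbertBasis ℕ ℂ H) {V : H →L[ℂ] H}
    (hV : ∀ A ∈ diagSet b I, V * A * star V ∈ diagSet b I) {n m k : ℕ} (hmk : k ≠ m)
    (hne : ⟪b m, V (b n)⟫_ℂ ≠ 0) : ⟪b k, V (b n)⟫_ℂ = 0 := by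
  obtain ⟨c, hc⟩ := (hV _ (rankOne_basis_mem hI hInz b n)).2 m
  rw [mul_apply_eq_comp, mul_apply_eq_comp, InnerProductSpace.rankOne_apply, map_smul,
    ContinuousLinearMap.star_eq_adjoint, ContinuousLinearMap.adjoint_inner_right] at hc
  have h := congrArg (fun x => ⟪b k, x⟫_ℂ) hc
  simp only [inner_smul_right, inner_hilbertBasis, if_neg hmk, mul_zero] at h
  refine (mul_eq_zero.mp h).resolve_left fun h0 => hne ?_
  exact inner_eq_zero_symm.mp h0

/-- If the rotation `W t` agrees modulo `I` with an operator `V` that has at most one nonzero entry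
in each column, then the diagonal operator of angles lies in `I`. Since the cosines are at least
`1 / 2`, the columns of `V` with vanishing even part span a subspace whose projection `P` lies in
`I`; the even-to-odd block of `V` is supported on `P`, so the sines, hence the angles, lie in `I`. -/
lemma diagonal_mem_of_rotation_sub_mem {I : Set (H →L[ℂ] H)} (hI : IsOperatorIdeal I)
    (b : HilbertBasis ℕ ℂ H) {θ : ℕ → ℝ} (hθ0 : ∀ n, 0 ≤ θ n) (hθ1 : ∀ n, θ n ≤ 1)
    {D E F Wt V : H →L[ℂ] H} (hD : ∀ n, D (b n) = (θ n : ℂ) • b n)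
    (hE : ∀ n, E (b n) = b (2 * n)) (hF : ∀ n, F (b n) = b (2 * n + 1)) {t : ℝ} (ht0 : t ≠ 0)
    (ht1 : |t| ≤ 1)
    (hW : ∀ n, Wt (b (2 * n)) =
      (Real.cos (t * θ n) : ℂ) • b (2 * n) + (Real.sin (t * θ n) : ℂ) • b (2 * n + 1))
    (hV : ∀ n m k : ℕ, k ≠ m → ⟪b m, V (b n)⟫_ℂ ≠ 0 → ⟪b k, V (b n)⟫_ℂ = 0)
    (hK : Wt - V ∈ I) : D ∈ I := by
  classical
  have hinj0 : Function.Injective (fun n : ℕ => 2 * n) := fun m n h => by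
    simp only at h; omega
  have hinj1 : Function.Injective (fun n : ℕ => 2 * n + 1) := fun m n h => by
    simp only at h; omega
  obtain ⟨hE1, hE2⟩ := star_apply_of_shift b hinj0 hE
  obtain ⟨hF1, hF2⟩ := star_apply_of_shift b hinj1 hF
  have hE3 : ∀ n, (star E) (b (2 * n + 1)) = 0 := fun n => hE2 _ fun m => by omega
  have hF3 : ∀ n, (star F) (b (2 * n)) = 0 := fun n => hF2 _ fun m => by omega
  have htθ : ∀ n, |t * θ n| ≤ 1 := fun n => by
    rw [abs_mul, abs_of_nonneg (hθ0 n)]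
    exact mul_le_one₀ ht1 (hθ0 n) (hθ1 n)
  have hcos : ∀ n, 1 / 2 ≤ Real.cos (t * θ n) := fun n => by
    have h1 := Real.one_sub_sq_div_two_le_cos (x := t * θ n)
    have h2 : (t * θ n) ^ 2 ≤ 1 := (sq_le_one_iff_abs_le_one _).mpr (htθ n)
    linarith
  let M : Set ℕ := {m | (star E) (V (b (2 * m))) = 0}
  let P : H →L[ℂ] H := diagOp b (fun n => if n ∈ M then 1 else 0)
  have hP : ∀ n, P (b n) = (if n ∈ M then (1 : ℂ) else 0) • b n := fun n =>
    diagOp_apply b (c := 1) (fun n => by split_ifs <;> simp) n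
  have hPI : P ∈ I := by
    -- on `M` the even-even block of `Wt - V` is the diagonal of cosines, which is invertible
    refine hI.diagOp_mem_of_factor b (A := star E * (Wt - V) * E * P)
      (a := fun n => if n ∈ M then (Real.cos (t * θ n) : ℂ) else 0)
      (q := fun n => (((Real.cos (t * θ n))⁻¹ : ℝ) : ℂ)) (c := 2) ?_ ?_ hP ?_
      (hI.mul_right _ (hI.mul_right _ (hI.mul_left _ hK)))
    · intro n
      rw [Complex.norm_real, Real.norm_eq_abs, abs_inv, abs_of_nonneg (by linarith [hcos n])]
      exact inv_le_of_inv_le₀ (by norm_num) (by linarith [hcos n])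
    · intro n
      simp only [mul_apply_eq_comp, hP]
      by_cases h : n ∈ M
      · have h' : (star E) (V (b (2 * n))) = 0 := h
        simp only [if_pos h, one_smul, hE, sub_apply, map_sub, h', hW, map_add, map_smul, hE1,
          hE3, smul_zero, add_zero, sub_zero]
      · simp [h]
    · intro n
      by_cases h : n ∈ M
      · have : Real.cos (t * θ n) ≠ 0 := by linarith [hcos n]
        simp only [if_pos h]
        rw [← Complex.ofReal_mul, inv_mul_cancel₀ this, Complex.ofReal_one]
      · simp [h]
  have hFVE : star F * V * E * P = star F * V * E := by
    refine clm_ext_hilbertBasis_s13 b fun m => ?_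
    simp only [mul_apply_eq_comp, hP]
    by_cases h : m ∈ M
    · simp [h]
    · simp only [if_neg h, zero_smul, map_zero, hE]
      obtain ⟨j, hj⟩ : ∃ j, ⟪b (2 * j), V (b (2 * m))⟫_ℂ ≠ 0 := by
        by_contra! hall
        refine h (eq_of_inner_hilbertBasis b fun i => ?_)
        rw [ContinuousLinearMap.star_eq_adjoint, ContinuousLinearMap.adjoint_inner_right, hE,
          hall, inner_zero_right]
      refine (eq_of_inner_hilbertBasis b fun i => ?_).symm
      rw [ContinuousLinearMap.star_eq_adjoint, ContinuousLinearMap.adjoint_inner_right, hF,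
        inner_zero_right]
      exact hV _ (2 * j) _ (by omega) hj
  have hsinI : star F * Wt * E ∈ I := by
    have h1 : star F * V * E ∈ I := hFVE ▸ hI.mul_left _ hPI
    have h2 : star F * (Wt - V) * E ∈ I := hI.mul_right _ (hI.mul_left _ hK)
    have h3 := hI.add_mem h2 h1
    rwa [mul_sub, sub_mul, sub_add_cancel] at h3
  have hsin : ∀ n, (star F * Wt * E) (b n) = (Real.sin (t * θ n) : ℂ) • b n := fun n => by
    simp only [mul_apply_eq_comp, hE, hW, map_add, map_smul, hF1, hF3, smul_zero, zero_add]
  have hlow : ∀ n, 2 / Real.pi * (|t| * θ n) ≤ |Real.sin (t * θ n)| := fun n => by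
    have := Real.mul_abs_le_abs_sin (x := t * θ n)
      ((htθ n).trans (by linarith [Real.pi_gt_three]))
    rwa [abs_mul, abs_of_nonneg (hθ0 n)] at this
  have htpos : 0 < |t| := abs_pos.mpr ht0
  refine hI.diagOp_mem_of_factor b (q := fun n => ((θ n / Real.sin (t * θ n) : ℝ) : ℂ))
    (c := Real.pi / (2 * |t|)) ?_ hsin hD ?_ hsinI
  · intro n
    rw [Complex.norm_real, Real.norm_eq_abs, abs_div, abs_of_nonneg (hθ0 n)]
    refine div_le_of_le_mul₀ (abs_nonneg _) (by positivity) ?_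
    calc θ n = Real.pi / (2 * |t|) * (2 / Real.pi * (|t| * θ n)) := by
          field_simp
      _ ≤ _ := by gcongr; exact hlow n
  · intro n
    rw [← Complex.ofReal_mul]
    by_cases h : Real.sin (t * θ n) = 0
    · have h1 := hlow n
      rw [h, abs_zero] at h1
      have h2 : θ n ≤ 0 := by
        by_contra! hpos
        have : 0 < 2 / Real.pi * (|t| * θ n) := by positivity
        linarith
      simp [le_antisymm h2 (hθ0 n)]
    · rw [div_mul_cancel₀ _ h]

end Rotations

/-! ### The family of Cartan subalgebras -/

/-- Let `I ⊊ J` be operator ideals with `{0} ⊊ I` and `J ⊊ B(H)`.  Then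
there exists an uncountable family `(C_α)_{α ∈ (0,1]}` of Cartan subalgebras of `J` that are
pairwise `U_J(H)`-conjugate, such that each `C_α ∩ I` is a Cartan subalgebra of `I`, and
for `α ≠ β` the subalgebras `C_α ∩ I` and `C_β ∩ I` are not `U_I(H)`-conjugate. -/
theorem conjugate_in_large_ideal_not_in_small_ideal
    {H : Type*} [NormedAddCommGroup H] [InnerProductSpace ℂ H] [CompleteSpace H]
    (b : HilbertBasis ℕ ℂ H)
    (I J : Set (H →L[ℂ] H))
    (hI : IsOperatorIdeal I) (hJ : IsOperatorIdeal J)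
    (hIJ : I ⊆ J)
    (hInz : ∃ T ∈ I, T ≠ (0 : H →L[ℂ] H))
    (hIltJ : ∃ T ∈ J, T ∉ I)
    (hJproper : ∃ T : H →L[ℂ] H, T ∉ J) :
    ∃ C : ℝ → Set (H →L[ℂ] H),
      (∀ α ∈ Ioc (0 : ℝ) 1, IsCartanSubalgebra J (C α)) ∧
      (∀ α ∈ Ioc (0 : ℝ) 1, ∀ β ∈ Ioc (0 : ℝ) 1,
        ∃ W : H →L[ℂ] H, W ∈ unitary (H →L[ℂ] H) ∧ W - 1 ∈ J ∧
          (fun T : H →L[ℂ] H => W * T * star W) '' C α = C β) ∧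
      (∀ α ∈ Ioc (0 : ℝ) 1, IsCartanSubalgebra I (C α ∩ I)) ∧
      (∀ α ∈ Ioc (0 : ℝ) 1, ∀ β ∈ Ioc (0 : ℝ) 1, α ≠ β →
        ¬ ∃ W : H →L[ℂ] H, W ∈ unitary (H →L[ℂ] H) ∧ W - 1 ∈ I ∧
          (fun T : H →L[ℂ] H => W * T * star W) '' (C α ∩ I) = C β ∩ I) := by
  -- a diagonal operator `D ∈ J \ I` with entries in `[0, 1]`
  obtain ⟨θ, D, hθ0, hθ1, hD, hDJ, hDI⟩ : ∃ (θ : ℕ → ℝ) (D : H →L[ℂ] H), (∀ n, 0 ≤ θ n) ∧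
      (∀ n, θ n ≤ 1) ∧ (∀ n, D (b n) = (θ n : ℂ) • b n) ∧ D ∈ J ∧ D ∉ I := by
    obtain ⟨T₀, hT₀J, hT₀I⟩ := hIltJ
    have hne : T₀ ≠ 0 := fun h => hT₀I (h ▸ hI.zero_mem)
    have hnorm : (‖T₀‖ : ℂ) ≠ 0 := by simpa using hne
    let T : H →L[ℂ] H := ((‖T₀‖ : ℂ)⁻¹) • T₀
    have hTJ : T ∈ J := hJ.smul_mem _ hT₀J
    have hTI : T ∉ I := fun h => hT₀I (by
      have := hI.smul_mem (‖T₀‖ : ℂ) h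
      rwa [smul_smul, mul_inv_cancel₀ hnorm, one_smul] at this)
    have hT1 : ‖T‖ = 1 := by
      simp [T, norm_smul, hne]
    obtain ⟨θ, D, X, Y, X', Y', h0, h1, hD, hDT, hTD⟩ :=
      exists_diagonal_equiv b (isCompactOperator_of_mem_proper hJ b hJproper hTJ)
    refine ⟨θ, D, h0, fun n => hT1 ▸ h1 n, hD, ?_, fun h => hTI ?_⟩
    · rw [hDT]; exact hJ.mul_right _ (hJ.mul_left _ hTJ)
    · rw [hTD]; exact hI.mul_right _ (hI.mul_left _ h)
  obtain ⟨E, F, W, hE, hF, hW0, hW1, hWstar, hWmem⟩ := exists_rotations b θ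
  have hWadd : ∀ s t, W s * W t = W (s + t) := by
    intro s t
    refine hilbertBasis_ext_even_odd b (fun n => ?_) (fun n => ?_)
    · rw [mul_apply_eq_comp, hW0, map_add, map_smul, map_smul, hW0, hW1, hW0, add_mul,
        Real.cos_add, Real.sin_add]
      push_cast
      module
    · rw [mul_apply_eq_comp, hW1, map_add, map_smul, map_smul, hW0, hW1, hW1, add_mul,
        Real.cos_add, Real.sin_add]
      push_cast
      module
  have hWzero : W 0 = 1 := by
    refine hilbertBasis_ext_even_odd b (fun n => ?_) (fun n => ?_)
    · simp [hW0]
    · simp [hW1]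
  have hWu : ∀ t, W t ∈ unitary (H →L[ℂ] H) := fun t => by
    rw [Unitary.mem_iff, hWstar, hWadd, hWadd]
    simp [hWzero]
  have hInzJ : ∃ T ∈ J, T ≠ (0 : H →L[ℂ] H) := by
    obtain ⟨T, hT, hT0⟩ := hInz
    exact ⟨T, hIJ hT, hT0⟩
  refine ⟨fun α => (fun T : H →L[ℂ] H => W α * T * star (W α)) '' diagSet b J, ?_, ?_, ?_, ?_⟩
  · intro α _
    exact isCartan_conj hJ (hWu α) (isCartan_diagSet hJ hInzJ b)
  · intro α _ β _
    refine ⟨W (β - α), hWu _, hWmem J hJ D hDJ hD _, ?_⟩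
    rw [Set.image_image]
    refine Set.image_congr fun T _ => ?_
    have h1 : W (β - α) * W α = W β := by rw [hWadd, sub_add_cancel]
    rw [← h1, star_mul]
    simp only [mul_assoc]
  · intro α _
    simp only [conj_diagSet_inter hI hIJ b (hWu α)]
    exact isCartan_conj hI (hWu α) (isCartan_diagSet hI hInz b)
  · rintro α hα β hβ hne ⟨U, hU, hUI, himg⟩
    simp only [conj_diagSet_inter hI hIJ b (hWu α), conj_diagSet_inter hI hIJ b (hWu β)] at himg
    refine hDI ?_
    -- `V` normalizes the diagonal operators of `I` and agrees with `W (α - β)` modulo `I`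
    let V : H →L[ℂ] H := star (W β) * U * W α
    have hββ : star (W β) * W β = 1 := Unitary.star_mul_self_of_mem (hWu β)
    have hV : ∀ A ∈ diagSet b I, V * A * star V ∈ diagSet b I := by
      intro A hA
      have hmem : U * (W α * A * star (W α)) * star U ∈
          (fun T : H →L[ℂ] H => W β * T * star (W β)) '' diagSet b I := by
        rw [← himg]
        exact ⟨_, ⟨A, hA, rfl⟩, rfl⟩
      obtain ⟨B, hB, hBeq⟩ := hmem
      have : V * A * star V = B := by
        calc V * A * star V
            = star (W β) * (U * (W α * A * star (W α)) * star U) * W β := by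
              simp only [V, star_mul, star_star, mul_assoc]
          _ = (star (W β) * W β) * B * (star (W β) * W β) := by
              rw [← hBeq]; simp only [mul_assoc]
          _ = B := by rw [hββ]; simp
      rwa [this]
    have hK : W (α - β) - V ∈ I := by
      have h1 : W (α - β) = star (W β) * W α := by
        rw [hWstar, hWadd]; congr 1; ring
      have h2 := hI.smul_mem (-1) (hI.mul_right (W α) (hI.mul_left (star (W β)) hUI))
      convert h2 using 1
      rw [h1]
      simp only [V, mul_sub, sub_mul, mul_one, neg_smul, one_smul, neg_sub]
    refine diagonal_mem_of_rotation_sub_mem hI b hθ0 hθ1 hD hE hF (sub_ne_zero.mpr hne) ?_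
      (hW0 _) (fun n m k => column_of_normalizer hI hInz b hV) hK
    rw [abs_le]
    constructor <;> linarith [hα.1, hα.2, hβ.1, hβ.2]
end
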